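/- arXiv:0803.4252 — 3 statements merged into one kernel-verified Lean document; each statement's English description precedes it below -/
import Mathlib

section
/- Let (X, d) be a compact metric space. The family of pseudometrics d̂_n, n ∈ ℕ, separates the points of I(X): if μ, ν ∈ I(X) and μ ≠ ν, then there exists n ∈ ℕ such that d̂_n(μ, ν) > 0. -/
/-- An idempotent (Maslov) probability measure on a topological space `X` is a functional
`μ : C(X, ℝ) → ℝ` that is normalized on constants, shifts under addition of constants, and
turns pointwise maxima into maxima. -/
def IsIdemMeasure {X : Type*} [TopologicalSpace X] (μ : C(X, ℝ) → ℝ) : Prop :=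
  (∀ c : ℝ, μ (ContinuousMap.const X c) = c) ∧
  (∀ (c : ℝ) (φ : C(X, ℝ)), μ (ContinuousMap.const X c + φ) = c + μ φ) ∧
  (∀ φ ψ : C(X, ℝ), μ (φ ⊔ ψ) = max (μ φ) (μ ψ))

/-- The space `I(X)` of idempotent probability measures on `X`; as a subtype of the product
`(C(X, ℝ) → ℝ)` it automatically carries the weak* (pointwise convergence) topology. -/
abbrev IdemMeasure (X : Type*) [TopologicalSpace X] :=
  {μ : C(X, ℝ) → ℝ // IsIdemMeasure μ}

/-- `n-LIP(X, d)`: the continuous functions that are Lipschitz with constant `n`. -/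
def nLip (X : Type*) [MetricSpace X] (n : ℕ) : Set C(X, ℝ) :=
  {φ | ∀ x y : X, |φ x - φ y| ≤ (n : ℝ) * dist x y}

/-- The pseudometric `d̂ₙ(μ, ν) = sup { |μ(φ) − ν(φ)| : φ ∈ n-LIP(X, d) }`. -/
noncomputable def dHat {X : Type*} [MetricSpace X] (n : ℕ) (μ ν : C(X, ℝ) → ℝ) : ℝ :=
  sSup {r : ℝ | ∃ φ ∈ nLip X n, r = |μ φ - ν φ|}

theorem idem_mono {X : Type*} [TopologicalSpace X] {μ : C(X, ℝ) → ℝ} (hμ : IsIdemMeasure μ)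
    {φ ψ : C(X, ℝ)} (h : ∀ x, φ x ≤ ψ x) : μ φ ≤ μ ψ := by
  have h1 : φ ⊔ ψ = ψ := sup_eq_right.2 (ContinuousMap.le_def.2 h)
  have h2 := hμ.2.2 φ ψ
  rw [h1] at h2
  rw [h2]
  exact le_max_left _ _

theorem lip_approx {X : Type*} [MetricSpace X] [CompactSpace X] [Nonempty X]
    (φ : C(X, ℝ)) (ε : ℝ) (hε : 0 < ε) :
    ∃ n : ℕ, ∃ g ∈ nLip X n, ∀ x, φ x ≤ g x ∧ g x ≤ ε + φ x := by
  have huc := CompactSpace.uniformContinuous_of_continuous φ.continuous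
  obtain ⟨δ, hδ, hd⟩ := Metric.uniformContinuous_iff.1 huc ε hε
  have hM : ∀ x, |φ x| ≤ ‖φ‖ := fun x => φ.norm_coe_le_norm x
  obtain ⟨n, hn⟩ := exists_nat_ge (2 * ‖φ‖ / δ)
  rw [div_le_iff₀ hδ] at hn
  have hn0 : (0 : ℝ) ≤ n := n.cast_nonneg
  have hb : ∀ x, BddAbove (Set.range fun y => φ y - n * dist x y) := by
    intro x
    refine ⟨‖φ‖, ?_⟩
    rintro _ ⟨y, rfl⟩
    have h1 := (abs_le.1 (hM y)).2
    have h2 : 0 ≤ (n : ℝ) * dist x y := by positivity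
    show φ y - n * dist x y ≤ ‖φ‖
    linarith
  have hl : ∀ x x', (⨆ y, (φ y - n * dist x y)) ≤ (⨆ y, (φ y - n * dist x' y)) + n * dist x x' := by
    intro x x'
    refine ciSup_le fun y => ?_
    have h1 := le_ciSup (hb x') y
    have h2 := mul_le_mul_of_nonneg_left (dist_triangle x' x y) hn0
    rw [dist_comm x' x] at h2
    linarith
  have hL : ∀ x x', |(⨆ y, (φ y - n * dist x y)) - (⨆ y, (φ y - n * dist x' y))| ≤ n * dist x x' := by
    intro x x'
    have h1 := hl x x'
    have h2 := hl x' x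
    rw [dist_comm x' x] at h2
    rw [abs_le]
    constructor <;> linarith
  have hc : Continuous fun x => ⨆ y, (φ y - n * dist x y) := by
    refine (LipschitzWith.of_dist_le_mul (K := (n : NNReal)) fun x x' => ?_).continuous
    rw [Real.dist_eq]
    simpa using hL x x'
  refine ⟨n, ⟨_, hc⟩, hL, fun x => ⟨?_, ?_⟩⟩
  · have h1 := le_ciSup (hb x) x
    simpa using h1
  · refine ciSup_le fun y => ?_
    by_cases hxy : dist x y < δ
    · have h1 := hd hxy
      rw [Real.dist_eq] at h1
      have h2 := (abs_lt.1 h1).1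
      have h3 : 0 ≤ (n : ℝ) * dist x y := by positivity
      linarith
    · have h1 := mul_le_mul_of_nonneg_left (not_lt.1 hxy) hn0
      have h2 := abs_le.1 (hM x)
      have h3 := abs_le.1 (hM y)
      linarith [h2.1, h3.2]

theorem dHat_pos {X : Type*} [MetricSpace X] [CompactSpace X] [Nonempty X]
    {μ ν : C(X, ℝ) → ℝ} (hμ : IsIdemMeasure μ) (hν : IsIdemMeasure ν) (n : ℕ)
    (g : C(X, ℝ)) (hg : g ∈ nLip X n) (hne : μ g ≠ ν g) : 0 < dHat n μ ν := by
  refine lt_of_lt_of_le (abs_pos.2 (sub_ne_zero.2 hne)) (le_csSup ?_ ⟨g, hg, rfl⟩)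
  obtain ⟨x0⟩ := ‹Nonempty X›
  refine ⟨2 * (n * Metric.diam (Set.univ : Set X)), ?_⟩
  rintro _ ⟨φ, hφ, rfl⟩
  have key : ∀ x, |φ x - φ x0| ≤ n * Metric.diam (Set.univ : Set X) := fun x =>
    (hφ x x0).trans (mul_le_mul_of_nonneg_left
      (Metric.dist_le_diam_of_mem isCompact_univ.isBounded (Set.mem_univ _) (Set.mem_univ _))
      n.cast_nonneg)
  have bd : ∀ {κ : C(X, ℝ) → ℝ}, IsIdemMeasure κ →
      φ x0 - n * Metric.diam (Set.univ : Set X) ≤ κ φ ∧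
      κ φ ≤ φ x0 + n * Metric.diam (Set.univ : Set X) := by
    intro κ hκ
    constructor
    · rw [← hκ.1 (φ x0 - n * Metric.diam (Set.univ : Set X))]
      refine idem_mono hκ fun x => ?_
      have := (abs_le.1 (key x)).1
      rw [ContinuousMap.const_apply]
      linarith
    · rw [← hκ.1 (φ x0 + n * Metric.diam (Set.univ : Set X))]
      refine idem_mono hκ fun x => ?_
      have := (abs_le.1 (key x)).2
      rw [ContinuousMap.const_apply]
      linarith
  have h1 := bd hμ
  have h2 := bd hν
  rw [abs_le]
  constructor <;> linarith [h1.1, h1.2, h2.1, h2.2]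

theorem exists_lip_ne {X : Type*} [MetricSpace X] [CompactSpace X] [Nonempty X]
    {μ ν : C(X, ℝ) → ℝ} (hμ : IsIdemMeasure μ) (hν : IsIdemMeasure ν)
    (φ : C(X, ℝ)) (h : μ φ < ν φ) : ∃ n : ℕ, ∃ g ∈ nLip X n, μ g ≠ ν g := by
  obtain ⟨n, g, hg, hx⟩ := lip_approx φ ((ν φ - μ φ) / 2) (by linarith)
  refine ⟨n, g, hg, ne_of_lt ?_⟩
  have h1 : μ g ≤ μ (ContinuousMap.const X ((ν φ - μ φ) / 2) + φ) :=
    idem_mono hμ fun x => by simpa using (hx x).2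
  have h2 : ν φ ≤ ν g := idem_mono hν fun x => (hx x).1
  rw [hμ.2.1] at h1
  linarith

/-- The family of pseudometrics `d̂ₙ`, `n ∈ ℕ`, separates the points of
`I(X)`: distinct idempotent probability measures have positive `d̂ₙ`-distance for some `n`. -/
theorem statement2 {X : Type*} [MetricSpace X] [CompactSpace X]
    (μ ν : C(X, ℝ) → ℝ) (hμ : IsIdemMeasure μ) (hν : IsIdemMeasure ν) (hne : μ ≠ ν) :
    ∃ n : ℕ, 0 < dHat n μ ν := by
  have hX : Nonempty X := by
    by_contra hX
    rw [not_nonempty_iff] at hX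
    have h0 := hμ.1 0
    have h1 := hμ.1 1
    have h2 : ContinuousMap.const X (0 : ℝ) = ContinuousMap.const X 1 :=
      ContinuousMap.ext fun x => hX.elim x
    rw [h2, h1] at h0
    exact one_ne_zero h0
  obtain ⟨φ, hφ⟩ := Function.ne_iff.1 hne
  rcases lt_or_gt_of_ne hφ with h | h
  · obtain ⟨n, g, hg, hn⟩ := exists_lip_ne hμ hν φ h
    exact ⟨n, dHat_pos hμ hν n g hg hn⟩
  · obtain ⟨n, g, hg, hn⟩ := exists_lip_ne hν hμ φ h
    exact ⟨n, dHat_pos hμ hν n g hg hn.symm⟩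
end

section
/- Let X be an infinite compact metrizable space. Then the space I(X) of idempotent probability measures on X, endowed with the weak* topology, is homeomorphic to the Hilbert cube Q = ∏_{i=1}^∞ [0, 1]. -/
section Helpers
open Set Topology

theorem shrinkB {Y : Type*} [TopologicalSpace Y] [CompactSpace Y]
    {Q : ℕ → Type*} [∀ n, TopologicalSpace (Q n)] [∀ n, CompactSpace (Q n)]
    [∀ n, TopologicalSpace.MetrizableSpace (Q n)]
    (p : ∀ n, C(Y, Q n)) (hsurj : ∀ n, Function.Surjective (p n))
    (hsep : ∀ y y', (∀ n, p n y = p n y') → y = y')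
    (hnear : ∀ n, p n ∈ closure (range fun h : Q (n+1) ≃ₜ Q n =>
      ((h : C(Q (n+1), Q n)).comp (p (n+1))))) :
    Nonempty (Y ≃ₜ Q 0) := by
  let G : ∀ k m, Set C(Y, Q k) := fun k m => range fun h : Q m ≃ₜ Q k =>
      ((h : C(Q m, Q k)).comp (p m))
  have hstep : ∀ k m, closure (G k m) ⊆ closure (G k (m+1)) := by
    intro k m
    apply closure_minimal _ isClosed_closure
    rintro _ ⟨h, rfl⟩
    have hc : Continuous fun f : C(Y, Q m) => (h : C(Q m, Q k)).comp f :=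
      ContinuousMap.continuous_postcomp _
    have := image_closure_subset_closure_image hc (mem_image_of_mem _ (hnear m))
    refine closure_mono ?_ this
    rintro _ ⟨_, ⟨h', rfl⟩, rfl⟩
    exact ⟨h'.trans h, by ext; rfl⟩
  have hmono : ∀ k, Monotone fun m => closure (G k m) := fun k =>
    monotone_nat_of_le_succ (hstep k)
  have hself : ∀ k, p k ∈ G k k := fun k => ⟨Homeomorph.refl _, by ext; rfl⟩
  have hdet : ∀ k m, k ≤ m → ∀ y y', p m y = p m y' → p k y = p k y' := by
    intro k m hkm y y' h
    have h1 : p k ∈ closure (G k m) := hmono k hkm (subset_closure (hself k))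
    have h2 : IsClosed {f : C(Y, Q k) | f y = f y'} :=
      isClosed_eq (continuous_eval_const y) (continuous_eval_const y')
    refine closure_minimal ?_ h2 h1
    rintro _ ⟨g, rfl⟩
    simp [h]
  let m0 : ∀ n, MetricSpace (Q n) := fun n => TopologicalSpace.metrizableSpaceMetric (Q n)
  let S : Set C(Y, Q 0) := closure (⋃ m, G 0 m)
  have hScl : IsClosed S := isClosed_closure
  have : CompleteSpace S := hScl.completeSpace_coe
  let O : ℕ × ℕ → Set C(Y, Q 0) := fun q =>
    {F | ∀ y y', F y = F y' → dist (p q.1 y) (p q.1 y') < 1 / ((q.2 : ℝ) + 1)}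
  have hO : ∀ q, IsOpen (O q) := by
    intro q
    let Z : Set (Y × Y) := {z | 1 / ((q.2 : ℝ) + 1) ≤ dist (p q.1 z.1) (p q.1 z.2)}
    have hZ : IsCompact Z := by
      apply IsClosed.isCompact
      exact isClosed_le continuous_const (by fun_prop)
    have hdiag : IsOpen {w : Q 0 × Q 0 | w.1 ≠ w.2} :=
      isOpen_ne_fun continuous_fst continuous_snd
    have h1 := ContinuousMap.isOpen_setOfPred_mapsTo hZ hdiag
    let T : C(Y, Q 0) → C(Y × Y, Q 0 × Q 0) := fun F => F.prodMap F
    have hT : Continuous T := by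
      apply ContinuousMap.continuous_of_continuous_uncurry
      have : Continuous fun w : C(Y, Q 0) × (Y × Y) => (w.1 w.2.1, w.1 w.2.2) := by fun_prop
      exact this
    have h2 := h1.preimage hT
    convert h2 using 1
    ext F
    simp only [O, Z, T, mem_ofPred_eq, mem_preimage, MapsTo, Prod.forall, ContinuousMap.prodMap_apply]
    refine forall_congr' fun y => forall_congr' fun y' => ?_
    constructor
    · intro h h' h''
      exact absurd (h h'') (not_lt.2 h')
    · intro h h'
      by_contra hc
      exact h (not_lt.1 hc) h'
  have hdense : ∀ q, Dense ((Subtype.val : S → C(Y, Q 0)) ⁻¹' (O q)) := by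
    intro q
    rw [Subtype.dense_iff]
    have h1 : S ⊆ closure (⋃ m, ⋃ (_ : q.1 ≤ m), G 0 m) := by
      apply closure_minimal _ isClosed_closure
      apply iUnion_subset
      intro m
      have : G 0 m ⊆ closure (G 0 (max m q.1)) :=
        subset_closure.trans (hmono 0 (le_max_left _ _))
      refine this.trans (closure_mono ?_)
      exact subset_iUnion₂_of_subset (max m q.1) (le_max_right _ _) subset_rfl
    refine h1.trans (closure_mono ?_)
    intro F hF
    simp only [mem_iUnion] at hF
    obtain ⟨m, hm, hF⟩ := hF
    have hFS : F ∈ S := subset_closure (mem_iUnion.2 ⟨m, hF⟩)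
    refine ⟨⟨F, hFS⟩, ?_, rfl⟩
    obtain ⟨h, rfl⟩ := hF
    intro y y' hy
    have : p m y = p m y' := h.injective hy
    rw [hdet _ _ hm _ _ this, dist_self]
    positivity
  have hB : Dense (⋂ q, (Subtype.val : S → C(Y, Q 0)) ⁻¹' (O q)) :=
    dense_iInter_of_isOpen (fun q => (hO q).preimage continuous_subtype_val) hdense
  have : Nonempty S := ⟨⟨p 0, subset_closure (mem_iUnion.2 ⟨0, hself 0⟩)⟩⟩
  obtain ⟨⟨F, hFS⟩, hF⟩ := hB.nonempty
  have hinj : Function.Injective F := by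
    intro y y' hy
    apply hsep
    intro n
    by_contra hne
    have hpos := dist_pos.2 hne
    obtain ⟨j, hj⟩ := exists_nat_one_div_lt hpos
    have := mem_iInter.1 hF (n, j)
    exact absurd (this y y' hy) (not_lt.2 hj.le)
  have hsur : Function.Surjective F := by
    intro q
    have hcl : IsClosed {F : C(Y, Q 0) | ∃ y, F y = q} := by
      have := ContinuousMap.isOpen_setOfPred_mapsTo (X := Y) (Y := Q 0) isCompact_univ
        (isOpen_compl_singleton (x := q))
      rw [← isOpen_compl_iff]
      convert this using 1
      ext F
      simp [MapsTo]
    refine closure_minimal ?_ hcl hFS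
    apply iUnion_subset
    rintro m _ ⟨h, rfl⟩
    obtain ⟨y, hy⟩ := hsurj m (h.symm q)
    exact ⟨y, by simp [hy]⟩
  exact ⟨Continuous.homeoOfEquivCompactToT2 (f := Equiv.ofBijective F ⟨hinj, hsur⟩)
    F.continuous⟩


section Near

/-- one-dimensional squeeze -/
noncomputable def psi (s a' a t : ℝ) : ℝ :=
  max (min (t + (a - a')) (a + (s / (a - a' + s)) * (t - a'))) t

noncomputable def psiInv (s a' a u : ℝ) : ℝ :=
  min (max (u - (a - a')) (a' + ((a - a' + s) / s) * (u - a))) u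

theorem psiInv_psi {s a' a : ℝ} (hs : 0 < s) (h : a' ≤ a) (t : ℝ) :
    psiInv s a' a (psi s a' a t) = t := by
  unfold psi psiInv
  have hd : 0 < a - a' + s := by linarith
  set m := s / (a - a' + s) with hm
  have hm0 : 0 < m := by positivity
  have hmi : (a - a' + s) / s = m⁻¹ := by rw [hm, inv_div]
  rw [hmi]
  have key : ∀ x y : ℝ, x ≤ a + m * (y - a') ↔ a' + m⁻¹ * (x - a) ≤ y := by
    intro x y
    rw [← le_sub_iff_add_le', inv_mul_le_iff₀ hm0]
    constructor <;> intro h <;> linarith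
  have key2 : ∀ y : ℝ, a' + m⁻¹ * (a + m * (y - a') - a) = y := by
    intro y; field_simp; ring
  rcases le_total (min (t + (a - a')) (a + m * (t - a'))) t with h1 | h1
  · rw [max_eq_right h1]
    apply min_eq_right
    rcases min_le_iff.1 h1 with h2 | h2
    · exact le_max_of_le_left (by linarith)
    · apply le_max_of_le_right
      by_contra hc
      push Not at hc
      have := (key t _).2 hc.le
      have h3 : t = a + m * (t - a') := le_antisymm (by nlinarith) h2
      have := key2 t
      rw [← h3] at this
      linarith
  · rw [max_eq_left h1]
    rcases le_total (t + (a - a')) (a + m * (t - a')) with h2 | h2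
    · rw [min_eq_left h2] at h1 ⊢
      have := (key _ _).1 h2
      rw [max_eq_left (by linarith), min_eq_left (by linarith)]
      ring
    · rw [min_eq_right h2] at h1 ⊢
      rw [key2, max_eq_right (by linarith), min_eq_left h1]

theorem psi_psiInv {s a' a : ℝ} (hs : 0 < s) (h : a' ≤ a) (u : ℝ) :
    psi s a' a (psiInv s a' a u) = u := by
  unfold psi psiInv
  have hd : 0 < a - a' + s := by linarith
  set m := s / (a - a' + s) with hm
  have hm0 : 0 < m := by positivity
  have hmi : (a - a' + s) / s = m⁻¹ := by rw [hm, inv_div]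
  rw [hmi]
  have key : ∀ x y : ℝ, a' + m⁻¹ * (x - a) ≤ y ↔ x ≤ a + m * (y - a') := by
    intro x y
    rw [← le_sub_iff_add_le', inv_mul_le_iff₀ hm0]
    constructor <;> intro h <;> linarith
  have key' : ∀ x y : ℝ, y ≤ a' + m⁻¹ * (x - a) ↔ a + m * (y - a') ≤ x := by
    intro x y
    rw [← sub_le_iff_le_add', le_inv_mul_iff₀ hm0]
    constructor <;> intro h <;> linarith
  have key2 : ∀ y : ℝ, a + m * (a' + m⁻¹ * (y - a) - a') = y := by
    intro y; field_simp; ring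
  rcases le_total u (max (u - (a - a')) (a' + m⁻¹ * (u - a))) with h1 | h1
  · rw [min_eq_right h1]
    apply max_eq_right
    rcases le_max_iff.1 h1 with h2 | h2
    · exact min_le_of_left_le (by linarith)
    · apply min_le_of_right_le
      exact (key' _ _).1 h2
  · rw [min_eq_left h1]
    rcases le_total (u - (a - a')) (a' + m⁻¹ * (u - a)) with h2 | h2
    · rw [max_eq_right h2] at h1 ⊢
      rw [key2, min_eq_right (by linarith), max_eq_left h1]
    · rw [max_eq_left h2] at h1 ⊢
      have := (key _ _).1 h2
      rw [min_eq_left (by linarith), max_eq_left (by linarith)]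
      ring

theorem psi_lower {s a' a : ℝ} (hs : 0 < s) (h : a' ≤ a) (t : ℝ) :
    a ≤ psi s a' a t ↔ a' ≤ t := by
  unfold psi
  have hd : 0 < a - a' + s := by linarith
  set m := s / (a - a' + s) with hm
  have hm0 : 0 < m := by positivity
  constructor
  · intro h1
    by_contra hc
    push Not at hc
    rcases le_max_iff.1 h1 with h2 | h2
    · have := (le_min_iff.1 h2).1
      linarith
    · linarith
  · intro h1
    apply le_max_of_le_left
    apply le_min (by linarith)
    nlinarith [mul_nonneg hm0.le (sub_nonneg.2 h1)]

theorem psi_ge_self {s a' a : ℝ} (t : ℝ) : t ≤ psi s a' a t := le_max_right _ _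

theorem psi_upper_const {s a' a b : ℝ} (hs : 0 < s) (h : a' ≤ a) (hb : a + s ≤ b) (t : ℝ)
    (ht : t ≤ b) : psi s a' a t ≤ b := by
  unfold psi
  have hd : 0 < a - a' + s := by linarith
  set m := s / (a - a' + s) with hm
  have hm0 : 0 < m := by positivity
  have hm1 : m ≤ 1 := by rw [hm, div_le_one hd]; linarith
  have hms : m * (a - a' + s) = s := by rw [hm]; field_simp
  refine max_le (min_le_of_right_le ?_) ht
  nlinarith

theorem psi_near {s a' a : ℝ} (hs : 0 < s) (h : a' ≤ a) (t : ℝ) (ht : a' ≤ t) :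
    |psi s a' a t - max t a| ≤ s := by
  have h1 := (psi_lower hs h t).2 ht
  have h2 := psi_ge_self (s := s) (a' := a') (a := a) t
  have h3 := psi_upper_const hs h (b := max t a + s)
    (by linarith [le_max_right t a]) t (by linarith [le_max_left t a])
  rw [abs_le]
  constructor
  · rcases max_cases t a with h4 | h4 <;> linarith
  · linarith

set_option linter.unusedSectionVars false

variable {ι : Type*} [Fintype ι] [DecidableEq ι]

/-- Lipschitz functions for a cost -/
def LipK {ι : Type*} (c : ι → ι → ℝ) : Set (ι → ℝ) := {g | ∀ i j, g i - g j ≤ c i j}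

/-- sup-convolution on a finite set -/
noncomputable def supc [Nonempty ι] (c : ι → ι → ℝ) (g : ι → ℝ) (j : ι) : ℝ :=
  Finset.univ.sup' Finset.univ_nonempty fun i => g i - c i j

def NearK [Nonempty ι] (c' c : ι → ι → ℝ) : Prop :=
  ∀ ε > 0, ∃ h : (ι → ℝ) ≃ₜ (ι → ℝ),
    (∀ g (s : ℝ), h (fun i => g i + s) = fun i => h g i + s) ∧
    (∀ g, g ∈ LipK c' ↔ h g ∈ LipK c) ∧
    ∀ g ∈ LipK c', ∀ i, |h g i - supc c g i| ≤ ε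

theorem supc_le [Nonempty ι] {c : ι → ι → ℝ} {g : ι → ℝ} {j : ι} {x : ℝ} :
    supc c g j ≤ x ↔ ∀ i, g i - c i j ≤ x := by simp [supc]

theorem le_supc [Nonempty ι] (c : ι → ι → ℝ) (g : ι → ℝ) (i j : ι) :
    g i - c i j ≤ supc c g j := by
  exact Finset.le_sup' (fun i => g i - c i j) (Finset.mem_univ i)

theorem supc_supc [Nonempty ι] {c c' : ι → ι → ℝ} (hd : ∀ i, c' i i = 0)
    (hle : ∀ i j, c i j ≤ c' i j) (ht : ∀ i j k, c i k ≤ c i j + c j k) (g : ι → ℝ) :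
    supc c (supc c' g) = supc c g := by
  funext j
  apply le_antisymm
  · rw [supc_le]
    intro i
    rw [sub_le_iff_le_add, supc_le]
    intro k
    have := le_supc c g k j
    linarith [hle k i, ht k i j]
  · rw [supc_le]
    intro i
    have h1 := le_supc c (supc c' g) i j
    have h2 := le_supc c' g i i
    rw [hd] at h2
    linarith

theorem supc_nonexp [Nonempty ι] {c : ι → ι → ℝ} {g g' : ι → ℝ} {ε : ℝ}
    (h : ∀ i, |g i - g' i| ≤ ε) (j : ι) : |supc c g j - supc c g' j| ≤ ε := by
  rw [abs_sub_le_iff]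
  constructor
  · rw [sub_le_iff_le_add', supc_le]
    intro i
    linarith [le_supc c g' i j, (abs_le.1 (h i)).2]
  · rw [sub_le_iff_le_add', supc_le]
    intro i
    linarith [le_supc c g i j, (abs_le.1 (h i)).1]

theorem NearK.trans [Nonempty ι] {c c' c'' : ι → ι → ℝ} (h1 : NearK c'' c') (h2 : NearK c' c)
    (hd : ∀ i, c' i i = 0)
    (hle : ∀ i j, c i j ≤ c' i j) (ht : ∀ i j k, c i k ≤ c i j + c j k) : NearK c'' c := by
  intro ε hε
  obtain ⟨f, f1, f2, f3⟩ := h1 (ε / 2) (by linarith)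
  obtain ⟨k, k1, k2, k3⟩ := h2 (ε / 2) (by linarith)
  refine ⟨f.trans k, ?_, ?_, ?_⟩
  · intro g s
    simp [f1, k1]
  · intro g
    rw [f2, k2]; rfl
  · intro g hg i
    have e1 := k3 (f g) ((f2 g).1 hg) i
    have e2 := supc_nonexp (c := c) (f3 g hg) i
    rw [supc_supc hd hle ht] at e2
    calc _ = |(k (f g) i - supc c (f g) i) + (supc c (f g) i - supc c g i)| := by
          congr 1; simp
      _ ≤ _ := (abs_add_le _ _).trans (by linarith)

theorem NearK.refl [Nonempty ι] {c : ι → ι → ℝ} (hd : ∀ i, c i i = 0) : NearK c c := by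
  intro ε hε
  refine ⟨Homeomorph.refl _, fun _ _ => rfl, fun _ => Iff.rfl, fun g hg i => ?_⟩
  have : supc c g i = g i := by
    apply le_antisymm
    · rw [supc_le]; intro k; linarith [hg k i]
    · have := le_supc c g i i
      rw [hd] at this; linarith
  simp [this, hε.le]

/-- elementary column move -/
theorem NearK.column [Nontrivial ι] {c c' : ι → ι → ℝ} (j : ι)
    (hd : ∀ i, c i i = 0) (hd' : ∀ i, c' i i = 0)
    (hle : ∀ i j, c i j ≤ c' i j) (heq : ∀ i k, k ≠ j → c i k = c' i k)
    (ht : ∀ i k, i ≠ j → k ≠ j → c i k < c i j + c j k) : NearK c' c := by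
  intro ε hε
  obtain ⟨j0, hj0⟩ := exists_ne j
  let E : Finset ι := Finset.univ.erase j
  have hE : E.Nonempty := ⟨j0, by simp [E, hj0]⟩
  have memE : ∀ i, i ∈ E ↔ i ≠ j := by simp [E]
  -- slack
  obtain ⟨σ, hσ, hσ'⟩ : ∃ σ > 0, ∀ i k, i ≠ j → k ≠ j → c i k + σ ≤ c i j + c j k := by
    have hne : (E ×ˢ E).Nonempty := hE.product hE
    refine ⟨(E ×ˢ E).inf' hne fun q => c q.1 j + c j q.2 - c q.1 q.2, ?_, ?_⟩
    · rw [gt_iff_lt, Finset.lt_inf'_iff]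
      rintro ⟨i, k⟩ hq
      simp only [Finset.mem_product, memE] at hq
      linarith [ht i k hq.1 hq.2]
    · intro i k hi hk
      have := Finset.inf'_le (fun q : ι × ι => c q.1 j + c j q.2 - c q.1 q.2)
        (Finset.mk_mem_product ((memE i).2 hi) ((memE k).2 hk))
      simp only at this
      linarith
  let s := min ε σ
  have hs : 0 < s := lt_min hε hσ
  let A : (ι → ι → ℝ) → (ι → ℝ) → ℝ := fun c g => E.sup' hE fun i => g i - c i j
  let Bd : (ι → ℝ) → ℝ := fun g => E.inf' hE fun i => g i + c j i
  have hA_cont : ∀ c, Continuous (A c) := by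
    intro c
    exact Continuous.finset_sup'_apply hE fun i _ => by fun_prop
  have hA_le : ∀ c g x, A c g ≤ x ↔ ∀ i, i ≠ j → g i - c i j ≤ x := by
    intro c g x; simp [A, memE]
  have hB_ge : ∀ g x, x ≤ Bd g ↔ ∀ i, i ≠ j → x ≤ g i + c j i := by
    intro g x; simp [Bd, memE]
  have hA_upd : ∀ c g x, A c (Function.update g j x) = A c g := by
    intro c g x
    apply Finset.sup'_congr hE rfl
    intro i hi
    rw [Function.update_of_ne ((memE i).1 hi)]
  have hA_add : ∀ c g (x : ℝ), A c (fun i => g i + x) = A c g + x := by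
    intro c g x
    apply le_antisymm
    · rw [hA_le]
      intro i hi
      linarith [(hA_le c g _).1 le_rfl i hi]
    · rw [← le_sub_iff_add_le, hA_le]
      intro i hi
      have := (hA_le c (fun i => g i + x) _).1 le_rfl i hi
      linarith
  have hAA : ∀ g, A c' g ≤ A c g := by
    intro g
    rw [hA_le]
    intro i hi
    linarith [(hA_le c g _).1 le_rfl i hi, hle i j]
  let h : (ι → ℝ) ≃ₜ (ι → ℝ) :=
    { toFun := fun g => Function.update g j (psi s (A c' g) (A c g) (g j))
      invFun := fun g => Function.update g j (psiInv s (A c' g) (A c g) (g j))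
      left_inv := by
        intro g
        simp only [hA_upd, Function.update_self, Function.update_idem]
        rw [psiInv_psi hs (hAA g), Function.update_eq_self]
      right_inv := by
        intro g
        simp only [hA_upd, Function.update_self, Function.update_idem]
        rw [psi_psiInv hs (hAA g), Function.update_eq_self]
      continuous_toFun := by
        refine continuous_id.update j ?_
        have h1 := hA_cont c
        have h2 := hA_cont c'
        unfold psi
        have h3 : ∀ g, A c g - A c' g + s ≠ 0 := fun g => by linarith [hAA g]
        fun_prop (disch := assumption)
      continuous_invFun := by
        refine continuous_id.update j ?_
        have h1 := hA_cont c
        have h2 := hA_cont c'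
        unfold psiInv
        fun_prop (disch := assumption) }
  have hh : ∀ g, h g = Function.update g j (psi s (A c' g) (A c g) (g j)) := fun g => rfl
  have hmem : ∀ (d : ι → ι → ℝ) (_ : ∀ i, d i i = 0) (_ : ∀ i k, k ≠ j → c i k = d i k) g,
      g ∈ LipK d ↔ (∀ i k, i ≠ j → k ≠ j → g i - g k ≤ c i k) ∧ A d g ≤ g j ∧ g j ≤ Bd g := by
    intro d hd0 hdc g
    rw [hA_le, hB_ge]
    constructor
    · intro hg
      refine ⟨fun i k hi hk => by rw [hdc i k hk]; exact hg i k, fun i hi => ?_, fun i hi => ?_⟩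
      · linarith [hg i j]
      · rw [hdc j i hi]; linarith [hg j i]
    · rintro ⟨h1, h2, h3⟩ i k
      by_cases hk : k = j
      · subst hk
        by_cases hi : i = k
        · subst hi; simp [hd0]
        · linarith [h2 i hi]
      · by_cases hi : i = j
        · subst hi
          rw [← hdc _ _ hk]; linarith [h3 k hk]
        · rw [← hdc _ _ hk]; exact h1 i k hi hk
  refine ⟨h, ?_, ?_, ?_⟩
  · intro g x
    rw [hh, hh]
    funext i
    by_cases hi : i = j
    · subst hi
      simp only [Function.update_self, hA_add]
      unfold psi
      rw [← max_add_add_right, ← min_add_add_right]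
      congr 2
      · ring
      · have : A c g + x - (A c' g + x) = A c g - A c' g := by ring
        rw [this]; ring
    · simp [Function.update_of_ne hi]
  · intro g
    rw [hmem c' hd' heq, hmem c hd (fun _ _ _ => rfl)]
    have hBu : ∀ x, Bd (Function.update g j x) = Bd g := by
      intro x
      apply Finset.inf'_congr hE rfl
      intro i hi
      rw [Function.update_of_ne ((memE i).1 hi)]
    have e1 : (∀ i k, i ≠ j → k ≠ j → h g i - h g k ≤ c i k) ↔
        (∀ i k, i ≠ j → k ≠ j → g i - g k ≤ c i k) := by
      refine forall_congr' fun i => forall_congr' fun k => forall_congr' fun hi =>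
        forall_congr' fun hk => ?_
      rw [hh, Function.update_of_ne hi, Function.update_of_ne hk]
    rw [e1]
    refine and_congr_right fun hg => ?_
    have hjj : h g j = psi s (A c' g) (A c g) (g j) := by rw [hh, Function.update_self]
    rw [hjj, hh, hA_upd, hBu, psi_lower hs (hAA g)]
    refine and_congr_right fun _ => ?_
    have hgap : A c g + s ≤ Bd g := by
      rw [hB_ge]
      intro k hk
      rw [← le_sub_iff_add_le, hA_le]
      intro i hi
      linarith [hg i k hi hk, hσ' i k hi hk, min_le_right ε σ]
    constructor
    · exact psi_upper_const hs (hAA g) hgap _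
    · exact fun h => (psi_ge_self _).trans h
  · intro g hg i
    by_cases hi : i = j
    · subst hi
      rw [hh, Function.update_self]
      have : supc c g i = max (g i) (A c g) := by
        apply le_antisymm
        · rw [supc_le]
          intro k
          by_cases hk : k = i
          · subst hk; rw [hd]; simp
          · exact le_max_of_le_right ((hA_le c g _).1 le_rfl k hk)
        · apply max_le
          · have := le_supc c g i i
            rw [hd] at this; linarith
          · rw [hA_le]; intro k _; exact le_supc c g k i
      rw [this]
      exact (psi_near hs (hAA g) _ ((hmem c' hd' heq g).1 hg).2.1).trans (min_le_left _ _)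
    · rw [hh, Function.update_of_ne hi]
      have : supc c g i = g i := by
        apply le_antisymm
        · rw [supc_le]; intro k; rw [heq k i hi]; linarith [hg k i]
        · have := le_supc c g i i
          rw [hd] at this; linarith
      simp [this, hε.le]

end Near


section Scale

theorem NearK.step {ι : Type*} [Fintype ι] [DecidableEq ι] [Nontrivial ι] {ρ : ι → ι → ℝ}
    (h0 : ∀ i, ρ i i = 0) (hnn : ∀ i j, 0 ≤ ρ i j) {q l : ℝ} (hq : 1 ≤ q) (hl : 0 < l)
    (hst : ∀ i j k, j ≠ i → j ≠ k → q * ρ i k < ρ i j + ρ j k) :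
    NearK (fun i j => q * l * ρ i j) (fun i j => l * ρ i j) := by
  let C : Finset ι → ι → ι → ℝ := fun S i j => if j ∈ S then l * ρ i j else q * l * ρ i j
  have hlq : ∀ i j, l * ρ i j ≤ q * l * ρ i j := by
    intro i j
    have := mul_nonneg hl.le (hnn i j)
    nlinarith
  have hC0 : ∀ S i, C S i i = 0 := by intro S i; simp [C, h0]
  have hClo : ∀ S i j, l * ρ i j ≤ C S i j := by
    intro S i j
    simp only [C]; split_ifs
    · exact le_rfl
    · exact hlq i j
  have hChi : ∀ S i j, C S i j ≤ q * l * ρ i j := by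
    intro S i j
    simp only [C]; split_ifs
    · exact hlq i j
    · exact le_rfl
  have hCs : ∀ S i j k, j ≠ i → j ≠ k → C S i k < C S i j + C S j k := by
    intro S i j k h1 h2
    have := mul_lt_mul_of_pos_left (hst i j k h1 h2) hl
    have h3 := hChi S i k
    have h4 := hClo S i j
    have h5 := hClo S j k
    nlinarith
  have hCt : ∀ S i j k, C S i k ≤ C S i j + C S j k := by
    intro S i j k
    by_cases h1 : j = i
    · subst h1; simp [hC0]
    by_cases h2 : j = k
    · subst h2; simp [hC0]
    exact (hCs S i j k h1 h2).le
  have main : ∀ S, NearK (C ∅) (C S) := by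
    intro S
    induction S using Finset.induction_on with
    | empty => exact NearK.refl (hC0 _)
    | insert j S hj ih =>
      have hle : ∀ i k, C (insert j S) i k ≤ C S i k := by
        intro i k
        simp only [C, Finset.mem_insert]
        by_cases h1 : k ∈ S
        · simp [h1]
        · by_cases h2 : k = j
          · simp only [h2, hj]; simpa using hlq i j
          · simp [h1, h2]
      refine ih.trans ?_ (hC0 _) hle (hCt _)
      refine NearK.column j (hC0 _) (hC0 _) hle ?_ ?_
      · intro i k hk
        simp [C, hk]
      · intro i k hi hk
        exact hCs _ i j k hi.symm hk.symm
  have := main Finset.univ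
  simpa [C] using this

theorem NearK.scale {ι : Type*} [Fintype ι] [DecidableEq ι] [Nontrivial ι] {ρ : ι → ι → ℝ}
    (h0 : ∀ i, ρ i i = 0) (hnn : ∀ i j, 0 ≤ ρ i j)
    (hst : ∀ i j k, j ≠ i → j ≠ k → ρ i k < ρ i j + ρ j k) {l l' : ℝ} (hl : 0 < l) (hll : l ≤ l') :
    NearK (fun i j => l' * ρ i j) (fun i j => l * ρ i j) := by
  obtain ⟨q, hq1, hq⟩ : ∃ q : ℝ, 1 < q ∧ ∀ i j k, j ≠ i → j ≠ k → q * ρ i k < ρ i j + ρ j k := by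
    have h1 : ∀ᶠ q : ℝ in 𝓝[>] 1, ∀ i j k, j ≠ i → j ≠ k → q * ρ i k < ρ i j + ρ j k := by
      simp only [Filter.eventually_all]
      intro i j k h1 h2
      have hc : Continuous fun q : ℝ => q * ρ i k := by fun_prop
      have : ∀ᶠ q : ℝ in 𝓝 1, q * ρ i k < ρ i j + ρ j k :=
        hc.continuousAt.eventually_lt continuousAt_const (by simpa using hst i j k h1 h2)
      exact this.filter_mono nhdsWithin_le_nhds
    obtain ⟨q, h2, h3⟩ := (h1.and self_mem_nhdsWithin).exists
    exact ⟨q, h3, h2⟩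
  have tri : ∀ i j k, ρ i k ≤ ρ i j + ρ j k := by
    intro i j k
    by_cases h1 : j = i
    · subst h1; simp [h0]
    by_cases h2 : j = k
    · subst h2; simp [h0]
    exact (hst i j k h1 h2).le
  have step : ∀ l l' : ℝ, 0 < l → l ≤ l' → l' ≤ q * l →
      NearK (fun i j => l' * ρ i j) (fun i j => l * ρ i j) := by
    intro l l' hl h1 h2
    have h3 : l' / l * l = l' := by field_simp
    have := NearK.step h0 hnn (q := l' / l) ((one_le_div hl).2 h1) hl (by
      intro i j k hi hk
      have h4 : l' / l ≤ q := (div_le_iff₀ hl).2 h2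
      exact lt_of_le_of_lt (mul_le_mul_of_nonneg_right h4 (hnn i k)) (hq i j k hi hk))
    rwa [h3] at this
  have main : ∀ (M : ℕ) (l' : ℝ), l ≤ l' → l' ≤ q ^ M * l →
      NearK (fun i j => l' * ρ i j) (fun i j => l * ρ i j) := by
    intro M
    induction M with
    | zero =>
      intro l' h1 h2
      have : l' = l := by linarith
      subst this
      exact NearK.refl (by simp [h0])
    | succ M ih =>
      intro l' h1 h2
      have hq0 : 0 < q := by linarith
      by_cases h3 : l' ≤ q * l
      · exact step l l' hl h1 h3
      · push Not at h3
        have h5 : q * (l' / q) = l' := by field_simp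
        have h4 : l ≤ l' / q := by rw [le_div_iff₀ hq0]; linarith
        have hpos : 0 < l' / q := by linarith
        refine (step (l' / q) l' hpos (by nlinarith) (by linarith)).trans
          (ih (l' / q) h4 ?_) (by simp [h0]) ?_ ?_
        · rw [div_le_iff₀ hq0]
          calc l' ≤ q ^ (M+1) * l := h2
            _ = _ := by ring
        · intro i j
          exact mul_le_mul_of_nonneg_right h4 (hnn i j)
        · intro i j k
          have := mul_le_mul_of_nonneg_left (tri i j k) hl.le
          linarith
  obtain ⟨M, hM⟩ := pow_unbounded_of_one_lt (l' / l) hq1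
  exact main M l' hll ((div_le_iff₀ hl).1 hM.le)

end Scale

section Split

/-- based Lipschitz functions -/
def LipB {ι : Type*} (c : ι → ι → ℝ) (b : ι) : Set (ι → ℝ) := {g | g ∈ LipK c ∧ g b = 0}

theorem LipB_isCompact {ι : Type*} {c : ι → ι → ℝ} {b : ι} : IsCompact (LipB c b) := by
  have h1 : IsCompact (Set.univ.pi fun i : ι => Set.Icc (-(c b i)) (c i b)) :=
    isCompact_univ_pi fun i => isCompact_Icc
  refine h1.of_isClosed_subset ?_ ?_
  · have : LipB c b = (⋂ i, ⋂ j, {g : ι → ℝ | g i - g j ≤ c i j}) ∩ {g | g b = 0} := by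
      ext g; simp [LipB, LipK]
    rw [this]
    refine IsClosed.inter (isClosed_iInter fun i => isClosed_iInter fun j => ?_) ?_
    · exact isClosed_le (by fun_prop) continuous_const
    · exact isClosed_eq (by fun_prop) continuous_const
  · intro g hg i _
    have e1 := hg.1 i b
    have e2 := hg.1 b i
    rw [hg.2] at e1 e2
    constructor <;> linarith

/-- the homeomorphism of based sets induced by an equivariant one -/
theorem based_homeo {ι : Type*} {c' c : ι → ι → ℝ} (b : ι) (h : (ι → ℝ) ≃ₜ (ι → ℝ))
    (h1 : ∀ g (s : ℝ), h (fun i => g i + s) = fun i => h g i + s)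
    (h2 : ∀ g, g ∈ LipK c' ↔ h g ∈ LipK c) :
    ∃ H : LipB c' b ≃ₜ LipB c b, ∀ g i, (H g : ι → ℝ) i = h g i - h g b := by
  have h1' : ∀ g (s : ℝ), h.symm (fun i => g i + s) = fun i => h.symm g i + s := by
    intro g s
    apply h.injective
    rw [h1]; simp
  have hshift : ∀ (d : ι → ι → ℝ) g (s : ℝ), g ∈ LipK d → (fun i => g i + s) ∈ LipK d := by
    intro d g s hg i j
    have := hg i j
    simpa using this
  refine ⟨{ toFun := fun g => ⟨fun i => h g i + -(h g b), hshift _ _ _ ((h2 _).1 g.2.1), by simp⟩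
            invFun := fun g => ⟨fun i => h.symm g i + -(h.symm g b),
              hshift _ _ _ ((h2 _).2 (by simpa using g.2.1)), by simp⟩
            left_inv := ?_
            right_inv := ?_
            continuous_toFun := ?_
            continuous_invFun := ?_ }, ?_⟩
  · intro g
    ext i
    simp [h1', g.2.2]
  · intro g
    ext i
    simp [h1, g.2.2]
  · have := h.continuous
    refine Continuous.subtype_mk ?_ _
    fun_prop
  · have := h.symm.continuous
    refine Continuous.subtype_mk ?_ _
    fun_prop
  · intro g i
    simp [sub_eq_add_neg]

noncomputable def lo (c : ℕ → ℕ → ℝ) (g : ℕ → ℝ) (m : ℕ) : ℝ :=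
  (Finset.range (m+1)).sup' Finset.nonempty_range_add_one fun i => g i - c i (m+1)

noncomputable def hi (c : ℕ → ℕ → ℝ) (g : ℕ → ℝ) (m : ℕ) : ℝ :=
  (Finset.range (m+1)).inf' Finset.nonempty_range_add_one fun i => g i + c (m+1) i

theorem lo_le {c g m} {x : ℝ} : lo c g m ≤ x ↔ ∀ i ≤ m, g i - c i (m+1) ≤ x := by
  simp [lo]

theorem le_hi {c g m} {x : ℝ} : x ≤ hi c g m ↔ ∀ i ≤ m, x ≤ g i + c (m+1) i := by
  simp [hi]

theorem lo_congr {c g g' m} (h : ∀ i ≤ m, g i = g' i) : lo c g m = lo c g' m := by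
  apply Finset.sup'_congr _ rfl
  intro i hi
  rw [h i (by simpa [Nat.lt_succ_iff] using hi)]

theorem hi_congr {c g g' m} (h : ∀ i ≤ m, g i = g' i) : hi c g m = hi c g' m := by
  apply Finset.inf'_congr _ rfl
  intro i hi
  rw [h i (by simpa [Nat.lt_succ_iff] using hi)]

theorem lo_continuous (c m) : Continuous fun g => lo c g m :=
  Continuous.finset_sup'_apply _ fun i _ => by fun_prop

theorem hi_continuous (c m) : Continuous fun g => hi c g m :=
  Continuous.finset_inf'_apply _ fun i _ => by fun_prop

theorem lo_lt_hi {c : ℕ → ℕ → ℝ} (hst : ∀ i j k, j ≠ i → j ≠ k → c i k < c i j + c j k)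
    {g m} (hg : ∀ i ≤ m, ∀ j ≤ m, g i - g j ≤ c i j) : lo c g m < hi c g m := by
  rw [hi, Finset.lt_inf'_iff]
  intro k hk
  rw [lo, Finset.sup'_lt_iff]
  intro i hi
  have hk' : k ≤ m := by simpa [Nat.lt_succ_iff] using hk
  have hi' : i ≤ m := by simpa [Nat.lt_succ_iff] using hi
  linarith [hg i hi' k hk', hst i (m+1) k (by omega) (by omega)]

/-- recursive extension -/
noncomputable def extend (c : ℕ → ℕ → ℝ) (N : ℕ) (u t : ℕ → ℝ) (n : ℕ) : ℝ :=
  if n ≤ N then u n else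
    lo c (fun i => if _h : i < n then extend c N u t i else 0) (n-1) +
      t (n - N - 1) * (hi c (fun i => if _h : i < n then extend c N u t i else 0) (n-1) -
      lo c (fun i => if _h : i < n then extend c N u t i else 0) (n-1))
termination_by n

theorem extend_le {c N u t n} (h : n ≤ N) : extend c N u t n = u n := by
  rw [extend, if_pos h]

theorem extend_succ (c N u t k) : extend c N u t (N + k + 1) =
    lo c (extend c N u t) (N + k) +
      t k * (hi c (extend c N u t) (N + k) - lo c (extend c N u t) (N + k)) := by
  rw [extend, if_neg (by omega)]
  have e : N + k + 1 - N - 1 = k := by omega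
  rw [e, Nat.add_sub_cancel]
  have h : ∀ i ≤ N + k, (fun i => if _h : i < N + k + 1 then extend c N u t i else 0) i
      = extend c N u t i := by
    intro i hi
    simp [Nat.lt_succ_of_le hi]
  rw [lo_congr h, hi_congr h]

theorem split_homeo {c : ℕ → ℕ → ℝ} (h0 : ∀ i, c i i = 0)
    (hst : ∀ i j k, j ≠ i → j ≠ k → c i k < c i j + c j k) (N : ℕ) :
    ∃ H : LipB c 0 ≃ₜ LipB (fun i j : Fin (N+1) => c i j) 0 × (ℕ → Set.Icc (0:ℝ) 1),
      ∀ g i, ((H g).1 : Fin (N+1) → ℝ) i = (g : ℕ → ℝ) i := by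
  have hlt : ∀ (g : LipB c 0) m, lo c g m < hi c g m := fun g m =>
    lo_lt_hi hst fun i _ j _ => g.2.1 i j
  have hlo : ∀ (g : LipB c 0) m, lo c g m ≤ (g : ℕ → ℝ) (m+1) := by
    intro g m
    rw [lo_le]; intro i _; linarith [g.2.1 i (m+1)]
  have hhi : ∀ (g : LipB c 0) m, (g : ℕ → ℝ) (m+1) ≤ hi c g m := by
    intro g m
    rw [le_hi]; intro i _; linarith [g.2.1 (m+1) i]
  let F : LipB c 0 → LipB (fun i j : Fin (N+1) => c i j) 0 × (ℕ → Set.Icc (0:ℝ) 1) := fun g =>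
    (⟨fun i => (g : ℕ → ℝ) i, fun i j => g.2.1 i j, by simpa using g.2.2⟩,
     fun k => ⟨((g : ℕ → ℝ) (N+k+1) - lo c g (N+k)) / (hi c g (N+k) - lo c g (N+k)),
      div_nonneg (by linarith [hlo g (N+k)]) (by linarith [hlt g (N+k)]),
      (div_le_one (by linarith [hlt g (N+k)])).2 (by linarith [hhi g (N+k)])⟩)
  have hF : Continuous F := by
    have e0 : ∀ i : ℕ, Continuous fun g : LipB c 0 => (g : ℕ → ℝ) i := fun i =>
      (continuous_apply i).comp continuous_subtype_val
    have e00 : Continuous fun (g : LipB c 0) (i : Fin (N+1)) => (g : ℕ → ℝ) i :=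
      continuous_pi fun i => e0 i
    refine Continuous.prodMk (e00.subtype_mk _) ?_
    refine continuous_pi fun k => Continuous.subtype_mk ?_ _
    have e1 := (lo_continuous c (N+k)).comp (continuous_subtype_val (p := (· ∈ LipB c 0)))
    have e2 := (hi_continuous c (N+k)).comp (continuous_subtype_val (p := (· ∈ LipB c 0)))
    refine Continuous.div (Continuous.sub (e0 _) e1) (e2.sub e1) ?_
    intro g
    have := hlt g (N+k)
    exact (sub_pos.2 this).ne'
  have hinj : Function.Injective F := by
    intro g g' hgg
    have e1 := congrArg Prod.fst hgg
    have e2 := congrArg Prod.snd hgg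
    have e3 : ∀ i ≤ N, (g : ℕ → ℝ) i = (g' : ℕ → ℝ) i := by
      intro i hi
      have := congrFun (congrArg Subtype.val e1) ⟨i, Nat.lt_succ_of_le hi⟩
      exact this
    have e4 : ∀ k, ∀ i ≤ N + k, (g : ℕ → ℝ) i = (g' : ℕ → ℝ) i := by
      intro k
      induction k with
      | zero => exact e3
      | succ k ih =>
        intro i hi'
        rcases Nat.lt_or_ge i (N+k+1) with h | h
        · exact ih i (by omega)
        · have : i = N+k+1 := by omega
          subst this
          have e5 := congrArg Subtype.val (congrFun e2 k)
          simp only [F] at e5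
          rw [lo_congr ih, hi_congr ih] at e5
          have hp : hi c g' (N+k) - lo c g' (N+k) ≠ 0 := by linarith [hlt g' (N+k)]
          rw [div_left_inj' hp] at e5
          linarith
    ext i
    exact e4 i i (by omega)
  have hsur : Function.Surjective F := by
    rintro ⟨u, t⟩
    let u' : ℕ → ℝ := fun i => if h : i < N+1 then (u : Fin (N+1) → ℝ) ⟨i, h⟩ else 0
    let g : ℕ → ℝ := extend c N u' (fun k => (t k : ℝ))
    have hgu : ∀ i : Fin (N+1), g i = (u : Fin (N+1) → ℝ) i := by
      intro i
      simp only [g]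
      rw [extend_le (Nat.lt_succ_iff.1 i.2)]
      simp only [u', i.2, dite_true]
    have hgs : ∀ k, g (N+k+1) = lo c g (N+k) + t k * (hi c g (N+k) - lo c g (N+k)) :=
      fun k => extend_succ _ _ _ _ _
    have hlip : ∀ k, ∀ i ≤ N + k, ∀ j ≤ N + k, g i - g j ≤ c i j := by
      intro k
      induction k with
      | zero =>
        intro i hi j hj
        have := u.2.1 ⟨i, Nat.lt_succ_of_le hi⟩ ⟨j, Nat.lt_succ_of_le hj⟩
        rw [← hgu, ← hgu] at this
        exact this
      | succ k ih =>
        have hl := lo_lt_hi hst ih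
        have ht := (t k).2
        have b1 : lo c g (N+k) ≤ g (N+k+1) := by
          rw [hgs]; nlinarith [ht.1]
        have b2 : g (N+k+1) ≤ hi c g (N+k) := by
          rw [hgs]; nlinarith [ht.2]
        rw [lo_le] at b1
        rw [le_hi] at b2
        intro i hi' j hj'
        rcases Nat.lt_or_ge i (N+k+1) with h | h
        · rcases Nat.lt_or_ge j (N+k+1) with h' | h'
          · exact ih i (by omega) j (by omega)
          · have : j = N+k+1 := by omega
            subst this
            linarith [b1 i (by omega)]
        · have : i = N+k+1 := by omega
          subst this
          rcases Nat.lt_or_ge j (N+k+1) with h' | h'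
          · linarith [b2 j (by omega)]
          · have : j = N+k+1 := by omega
            subst this
            simp [h0]
    have hg : g ∈ LipB c 0 := by
      refine ⟨fun i j => hlip (i+j) i (by omega) j (by omega), ?_⟩
      have := hgu 0
      rw [u.2.2] at this
      exact this
    refine ⟨⟨g, hg⟩, ?_⟩
    refine Prod.ext ?_ ?_
    · ext i; exact hgu i
    · ext k
      have hl := hlt ⟨g, hg⟩ (N+k)
      simp only [F]
      rw [hgs]
      have : hi c g (N+k) - lo c g (N+k) ≠ 0 := by
        have : lo c g (N+k) < hi c g (N+k) := hl
        linarith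
      field_simp
      ring
  have : CompactSpace (LipB c 0) := isCompact_iff_compactSpace.1 LipB_isCompact
  exact ⟨Continuous.homeoOfEquivCompactToT2 (f := Equiv.ofBijective F ⟨hinj, hsur⟩) hF,
    fun g i => rfl⟩

end Split

section Idem

variable {X : Type*} [TopologicalSpace X]

theorem IsIdemMeasure.mono {μ : C(X, ℝ) → ℝ} (h : IsIdemMeasure μ) {φ ψ : C(X, ℝ)}
    (hle : ∀ z, φ z ≤ ψ z) : μ φ ≤ μ ψ := by
  have e : φ ⊔ ψ = ψ := sup_eq_right.2 hle
  have := h.2.2 φ ψ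
  rw [e] at this
  rw [this]
  exact le_max_left _ _

theorem IsIdemMeasure.mono_add {μ : C(X, ℝ) → ℝ} (h : IsIdemMeasure μ) {φ ψ : C(X, ℝ)} (c : ℝ)
    (hle : ∀ z, φ z ≤ c + ψ z) : μ φ ≤ c + μ ψ := by
  rw [← h.2.1]
  exact h.mono (by simpa using hle)

theorem IsIdemMeasure.cover {μ : C(X, ℝ) → ℝ} (h : IsIdemMeasure μ) {κ : Type*} [Fintype κ]
    [Nonempty κ] (f : κ → C(X, ℝ)) (c : κ → ℝ) (ψ : C(X, ℝ))
    (hle : ∀ z, ∃ l, ψ z ≤ c l + f l z) : ∃ l, μ ψ ≤ c l + μ (f l) := by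
  have hs : (Finset.univ : Finset κ).Nonempty := Finset.univ_nonempty
  let F : κ → C(X, ℝ) := fun l => ContinuousMap.const X (c l) + f l
  have e1 : μ (Finset.univ.sup' hs F) = Finset.univ.sup' hs (μ ∘ F) :=
    Finset.apply_sup'_eq_sup'_comp hs μ h.2.2
  obtain ⟨l, -, hl⟩ := Finset.exists_mem_eq_sup' hs (μ ∘ F)
  refine ⟨l, ?_⟩
  have e2 : μ (F l) = c l + μ (f l) := h.2.1 _ _
  rw [← e2]
  change _ ≤ (μ ∘ F) l
  rw [← hl, ← e1]
  apply h.mono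
  intro z
  obtain ⟨l, e⟩ := hle z
  exact e.trans (Finset.le_sup' F (Finset.mem_univ l) z)

theorem IsIdemMeasure.isClosed : IsClosed {μ : C(X, ℝ) → ℝ | IsIdemMeasure μ} := by
  have e : {μ : C(X, ℝ) → ℝ | IsIdemMeasure μ} =
    (⋂ c : ℝ, {μ : C(X, ℝ) → ℝ | μ (ContinuousMap.const X c) = c}) ∩
    ((⋂ c : ℝ, ⋂ φ : C(X, ℝ), {μ : C(X, ℝ) → ℝ | μ (ContinuousMap.const X c + φ) = c + μ φ}) ∩
    (⋂ φ : C(X, ℝ), ⋂ ψ : C(X, ℝ), {μ : C(X, ℝ) → ℝ | μ (φ ⊔ ψ) = max (μ φ) (μ ψ)})) := by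
    ext μ
    simp [IsIdemMeasure]
  rw [e]
  refine IsClosed.inter (isClosed_iInter fun c => isClosed_eq (by fun_prop) (by fun_prop))
    (IsClosed.inter (isClosed_iInter fun c => isClosed_iInter fun φ =>
      isClosed_eq (by fun_prop) (by fun_prop)) 
      (isClosed_iInter fun φ => isClosed_iInter fun ψ => isClosed_eq (by fun_prop) (by fun_prop)))

theorem idem_compact [CompactSpace X] : CompactSpace (IdemMeasure X) := by
  apply isCompact_iff_compactSpace.1
  refine IsCompact.of_isClosed_subset
    (isCompact_univ_pi fun φ : C(X, ℝ) => isCompact_Icc (a := -‖φ‖) (b := ‖φ‖))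
    IsIdemMeasure.isClosed ?_
  intro μ h φ _
  have h' : IsIdemMeasure μ := h
  constructor
  · rw [← h'.1 (-‖φ‖)]
    exact h'.mono fun z => neg_le_of_abs_le (φ.norm_coe_le_norm z)
  · rw [← h'.1 (‖φ‖)]
    exact h'.mono fun z => le_of_abs_le (φ.norm_coe_le_norm z)

end Idem

section Rho

variable {X : Type*} [MetricSpace X]

/-- square root of the distance: a strict metric -/
noncomputable def rho (a b : X) : ℝ := Real.sqrt (dist a b)

theorem rho_self (a : X) : rho a a = 0 := by simp [rho]
theorem rho_nonneg (a b : X) : 0 ≤ rho a b := Real.sqrt_nonneg _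
theorem rho_comm (a b : X) : rho a b = rho b a := by simp [rho, dist_comm]
theorem rho_strict {a b c : X} (h1 : b ≠ a) (h2 : b ≠ c) : rho a c < rho a b + rho b c := by
  unfold rho
  have p1 : 0 < Real.sqrt (dist a b) := Real.sqrt_pos.2 (dist_pos.2 h1.symm)
  have p2 : 0 < Real.sqrt (dist b c) := Real.sqrt_pos.2 (dist_pos.2 h2)
  rw [Real.sqrt_lt' (by positivity)]
  have q1 := Real.sq_sqrt (dist_nonneg (x := a) (y := b))
  have q2 := Real.sq_sqrt (dist_nonneg (x := b) (y := c))
  nlinarith [dist_triangle a b c, mul_pos p1 p2]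
theorem rho_triangle (a b c : X) : rho a c ≤ rho a b + rho b c := by
  by_cases h1 : b = a
  · subst h1; simp [rho_self]
  by_cases h2 : b = c
  · subst h2; simp [rho_self]
  exact (rho_strict h1 h2).le
theorem rho_continuous (a : X) : Continuous (rho a) := by
  unfold rho; fun_prop

/-- the cone function with slope `l` at `a` -/
noncomputable def cone (l : ℝ) (a : X) : C(X, ℝ) :=
  ⟨fun z => -(l * rho a z), (continuous_const.mul (rho_continuous a)).neg⟩

@[simp] theorem cone_apply (l : ℝ) (a z : X) : cone l a z = -(l * rho a z) := rfl

theorem exists_seq [CompactSpace X] [Infinite X] :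
    ∃ x : ℕ → X, Function.Injective x ∧ DenseRange x := by
  obtain ⟨s, hs, hd⟩ := TopologicalSpace.exists_countable_dense X
  have hinf : s.Infinite := by
    intro hf
    have := hd.closure_eq
    rw [hf.isClosed.closure_eq] at this
    rw [this] at hf
    exact Set.infinite_univ hf
  have : Infinite s := hinf.to_subtype
  have : Countable s := hs.to_subtype
  obtain ⟨e⟩ := nonempty_equiv_of_countable (α := ℕ) (β := s)
  refine ⟨fun n => e n, Subtype.val_injective.comp e.injective, ?_⟩
  have : range (fun n => (e n : X)) = s := by
    rw [show (fun n => (e n : X)) = Subtype.val ∘ e from rfl, e.surjective.range_comp]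
    simp
  rw [DenseRange, this]; exact hd

theorem exists_net [CompactSpace X] {x : ℕ → X} (hx : DenseRange x) {δ : ℝ} (hδ : 0 < δ) :
    ∃ N : ℕ, 1 ≤ N ∧ ∀ z, ∃ i : Fin (N+1), rho (x i) z < δ := by
  obtain ⟨t, ht⟩ := isCompact_univ.elim_finite_subcover (fun i : ℕ => {z | rho (x i) z < δ})
    (fun i => isOpen_lt (rho_continuous _) continuous_const) (by
      intro z _
      have : IsOpen {y | rho z y < δ} := isOpen_lt (rho_continuous _) continuous_const
      obtain ⟨i, hi⟩ := hx.exists_mem_open this ⟨z, by simpa [rho_self] using hδ⟩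
      rw [mem_iUnion]
      exact ⟨i, by rw [mem_ofPred_eq, rho_comm]; exact hi⟩)
  refine ⟨t.sup id + 1, by omega, fun z => ?_⟩
  have := ht (mem_univ z)
  simp only [mem_iUnion] at this
  obtain ⟨i, hi, h⟩ := this
  have : i ≤ t.sup id := Finset.le_sup (f := id) hi
  exact ⟨⟨i, by omega⟩, h⟩

theorem IsIdemMeasure.cone_lip {μ : C(X, ℝ) → ℝ} (h : IsIdemMeasure μ) {l : ℝ} (hl : 0 ≤ l)
    (a b : X) : μ (cone l a) - μ (cone l b) ≤ l * rho a b := by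
  have := h.mono_add (φ := cone l a) (ψ := cone l b) (l * rho a b) (by
    intro z
    simp only [cone_apply]
    have := rho_triangle b a z
    rw [rho_comm b a] at this
    nlinarith)
  linarith

theorem IsIdemMeasure.supc_near {μ : C(X, ℝ) → ℝ} (h : IsIdemMeasure μ) {l l' : ℝ} (hl : 0 ≤ l)
    (hll : l ≤ l') {x : ℕ → X} {N : ℕ} {δ : ℝ}
    (hN : ∀ z, ∃ i : Fin (N+1), rho (x i) z < δ) (i : Fin (N+1)) :
    |supc (fun i j : Fin (N+1) => l * rho (x i) (x j)) (fun k => μ (cone l' (x k))) i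
      - μ (cone l (x i))| ≤ (l + l') * δ := by
  rw [abs_le]
  constructor
  · obtain ⟨k, hk⟩ := h.cover (fun k : Fin (N+1) => cone l' (x k))
      (fun k => (l + l') * δ - l * rho (x k) (x i)) (cone l (x i)) (by
        intro z
        obtain ⟨k, hk⟩ := hN z
        refine ⟨k, ?_⟩
        simp only [cone_apply]
        have h1 := rho_triangle (x k) z (x i)
        rw [rho_comm z] at h1
        have h2 := mul_le_mul_of_nonneg_left h1 hl
        have h3 := mul_le_mul_of_nonneg_left hk.le (by linarith : 0 ≤ l + l')
        nlinarith)
    have := le_supc (fun i j : Fin (N+1) => l * rho (x i) (x j))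
      (fun k => μ (cone l' (x k))) k i
    linarith
  · have : 0 ≤ (l + l') * δ := by
      obtain ⟨k, hk⟩ := hN (x 0)
      have := rho_nonneg (x k) (x 0)
      have : 0 ≤ l + l' := by linarith
      have : 0 ≤ δ := by linarith
      positivity
    rw [sub_le_iff_le_add]
    rw [supc_le]
    intro k
    have := h.mono_add (φ := cone l' (x k)) (ψ := cone l (x i)) (l * rho (x k) (x i)) (by
      intro z
      simp only [cone_apply]
      have h1 := rho_triangle (x i) (x k) z
      rw [rho_comm (x i) (x k)] at h1
      have h2 := mul_le_mul_of_nonneg_left h1 hl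
      have h3 := mul_le_mul_of_nonneg_right hll (rho_nonneg (x k) z)
      nlinarith)
    linarith

end Rho

section Main

variable {X : Type*} [MetricSpace X]

/-- the based finite-slope space -/
abbrev Qs (x : ℕ → X) (l : ℝ) : Set (ℕ → ℝ) := LipB (fun i j : ℕ => l * rho (x i) (x j)) 0

/-- the projection -/
noncomputable def pmap (x : ℕ → X) (l : ℝ) (hl : 0 ≤ l) : C(IdemMeasure X, Qs x l) :=
  ⟨fun μ => ⟨fun i => μ.1 (cone l (x i)) - μ.1 (cone l (x 0)),
    fun i j => by
      have := μ.2.cone_lip hl (x i) (x j)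
      linarith, by simp⟩, by
    refine Continuous.subtype_mk (f := fun (μ : IdemMeasure X) (i : ℕ) =>
      μ.1 (cone l (x i)) - μ.1 (cone l (x 0))) ?_ _
    refine continuous_pi fun i => ?_
    exact ((continuous_apply _).comp continuous_subtype_val).sub
      ((continuous_apply _).comp continuous_subtype_val)⟩

theorem pmap_apply (x : ℕ → X) (l : ℝ) (hl : 0 ≤ l) (μ : IdemMeasure X) (i : ℕ) :
    (pmap x l hl μ : ℕ → ℝ) i = μ.1 (cone l (x i)) - μ.1 (cone l (x 0)) := rfl

theorem pmap_surj [CompactSpace X] (x : ℕ → X) (l : ℝ) (hl : 0 ≤ l) :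
    Function.Surjective (pmap x l hl) := by
  intro g
  have hbg : ∃ M, ∀ i, (g : ℕ → ℝ) i ≤ M := by
    obtain ⟨M, hM⟩ := (isCompact_range (rho_continuous (x 0))).bddAbove
    refine ⟨l * M, fun i => ?_⟩
    have h1 := g.2.1 i 0
    rw [g.2.2] at h1
    beta_reduce at h1
    rw [rho_comm] at h1
    have h2 := mul_le_mul_of_nonneg_left (hM (mem_range_self (x i))) hl
    linarith
  obtain ⟨M, hM⟩ := hbg
  have hb : ∀ ψ : C(X, ℝ), BddAbove (range fun i => (g : ℕ → ℝ) i + ψ (x i)) := by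
    intro ψ
    refine ⟨M + ‖ψ‖, ?_⟩
    rintro _ ⟨i, rfl⟩
    have := le_of_abs_le (ψ.norm_coe_le_norm (x i))
    have := hM i
    simp only
    linarith
  have hb0 : BddAbove (range (g : ℕ → ℝ)) := ⟨M, by rintro _ ⟨i, rfl⟩; exact hM i⟩
  let S : ℝ := ⨆ i, (g : ℕ → ℝ) i
  let T : C(X, ℝ) → ℝ := fun ψ => ⨆ i, ((g : ℕ → ℝ) i + ψ (x i))
  have hT : ∀ ψ r, T ψ ≤ r ↔ ∀ i, (g : ℕ → ℝ) i + ψ (x i) ≤ r := fun ψ r => ciSup_le_iff (hb ψ)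
  have hT' : ∀ ψ i, (g : ℕ → ℝ) i + ψ (x i) ≤ T ψ := fun ψ i => le_ciSup (hb ψ) i
  have hadd : ∀ (c : ℝ) (φ : C(X, ℝ)), T (ContinuousMap.const X c + φ) = c + T φ := by
    intro c φ
    apply le_antisymm
    · rw [hT]
      intro i
      have := hT' φ i
      simp only [ContinuousMap.add_apply, ContinuousMap.const_apply]
      linarith
    · rw [← le_sub_iff_add_le', hT]
      intro i
      have := hT' (ContinuousMap.const X c + φ) i
      simp only [ContinuousMap.add_apply, ContinuousMap.const_apply] at this
      linarith
  have hμ : IsIdemMeasure (fun ψ => T ψ - S) := by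
    refine ⟨?_, ?_, ?_⟩
    · intro c
      have h1 := hadd c 0
      have h2 : T 0 = S := by simp [T, S]
      rw [add_zero, h2] at h1
      simp only [h1]; ring
    · intro c φ
      simp only [hadd]; ring
    · intro φ ψ
      beta_reduce
      rw [max_sub_sub_right]
      congr 1
      apply le_antisymm
      · rw [hT]
        intro i
        rw [ContinuousMap.sup_apply]
        rcases le_total (φ (x i)) (ψ (x i)) with h | h
        · rw [sup_eq_right.2 h]; exact (hT' ψ i).trans (le_max_right _ _)
        · rw [sup_eq_left.2 h]; exact (hT' φ i).trans (le_max_left _ _)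
      · apply max_le
        · rw [hT]; intro i
          have := hT' (φ ⊔ ψ) i
          rw [ContinuousMap.sup_apply] at this
          linarith [le_sup_left (a := φ (x i)) (b := ψ (x i))]
        · rw [hT]; intro i
          have := hT' (φ ⊔ ψ) i
          rw [ContinuousMap.sup_apply] at this
          linarith [le_sup_right (a := φ (x i)) (b := ψ (x i))]
  have hc : ∀ k, T (cone l (x k)) = (g : ℕ → ℝ) k := by
    intro k
    apply le_antisymm
    · rw [hT]; intro i
      have := g.2.1 i k
      simp only [cone_apply]
      rw [rho_comm (x k)]
      linarith
    · have := hT' (cone l (x k)) k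
      simp only [cone_apply, rho_self] at this
      linarith
  refine ⟨⟨_, hμ⟩, ?_⟩
  apply Subtype.ext
  funext i
  rw [pmap_apply]
  simp only [hc]
  have := g.2.2
  rw [this]; ring

theorem pmap_sep_le [CompactSpace X] {x : ℕ → X} (hx : DenseRange x) (μ ν : IdemMeasure X)
    (h : ∀ n : ℕ, pmap x ((n:ℝ)+1) (by positivity) μ = pmap x ((n:ℝ)+1) (by positivity) ν)
    (φ : C(X, ℝ)) : μ.1 φ ≤ ν.1 φ := by
  apply le_of_forall_pos_le_add
  intro ε' hε'
  obtain ⟨ε, hε, rfl⟩ : ∃ ε, 0 < ε ∧ ε' = 5 * ε := ⟨ε'/5, by positivity, by ring⟩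
  have huc := CompactSpace.uniformContinuous_of_continuous φ.continuous
  rw [Metric.uniformContinuous_iff] at huc
  obtain ⟨δ, hδ, huc⟩ := huc ε hε
  obtain ⟨n, hn⟩ := exists_nat_ge (2 * ‖φ‖ / Real.sqrt δ)
  set l : ℝ := (n:ℝ) + 1 with hl
  have hl0 : 0 < l := by positivity
  have hsδ : 0 < Real.sqrt δ := Real.sqrt_pos.2 hδ
  have hlδ : 2 * ‖φ‖ ≤ l * Real.sqrt δ := by
    rw [div_le_iff₀ hsδ] at hn
    nlinarith
  have hnear : ∀ a z, rho a z < Real.sqrt δ → |φ a - φ z| < ε := by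
    intro a z haz
    have : dist a z < δ := (Real.sqrt_lt_sqrt_iff dist_nonneg).1 haz
    simpa [Real.dist_eq] using huc this
  have hlow : ∀ a z, φ a - l * rho a z ≤ φ z + ε := by
    intro a z
    rcases lt_or_ge (rho a z) (Real.sqrt δ) with h1 | h1
    · have := (abs_lt.1 (hnear a z h1)).2
      have := mul_nonneg hl0.le (rho_nonneg a z)
      linarith
    · have h2 := mul_le_mul_of_nonneg_left h1 hl0.le
      have h3 := le_of_abs_le (φ.norm_coe_le_norm a)
      have h4 := neg_le_of_abs_le (φ.norm_coe_le_norm z)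
      linarith
  obtain ⟨N, -, hN⟩ := exists_net hx (δ := min (Real.sqrt δ) (ε / l)) (by positivity)
  have hN1 : ∀ z, ∃ i : Fin (N+1), rho (x i) z < Real.sqrt δ ∧ l * rho (x i) z ≤ ε := by
    intro z
    obtain ⟨i, hi⟩ := hN z
    rw [lt_min_iff] at hi
    refine ⟨i, hi.1, ?_⟩
    have := hi.2.le
    rw [le_div_iff₀ hl0] at this
    linarith
  obtain ⟨i, hi⟩ := μ.2.cover (fun i : Fin (N+1) => cone l (x i)) (fun i => φ (x i) + 2 * ε) φ (by
    intro z
    obtain ⟨i, h1, h2⟩ := hN1 z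
    refine ⟨i, ?_⟩
    have := (abs_lt.1 (hnear _ _ h1)).1
    simp only [cone_apply]
    linarith)
  have hi2 := ν.2.mono_add (φ := cone l (x i)) (ψ := φ) (ε - φ (x i)) (by
    intro z
    have := hlow (x i) z
    simp only [cone_apply]
    linarith)
  obtain ⟨k, hk⟩ := ν.2.cover (fun i : Fin (N+1) => cone l (x i)) (fun i => ε)
    (ContinuousMap.const X 0) (by
    intro z
    obtain ⟨i, h1, h2⟩ := hN1 z
    refine ⟨i, ?_⟩
    simp only [cone_apply, ContinuousMap.const_apply]
    linarith)
  rw [ν.2.1] at hk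
  have hk2 := μ.2.mono (φ := cone l (x k)) (ψ := ContinuousMap.const X 0) (by
    intro z
    have := mul_nonneg hl0.le (rho_nonneg (x k) z)
    simp only [cone_apply, ContinuousMap.const_apply]
    linarith)
  rw [μ.2.1] at hk2
  have e : ∀ j : ℕ, μ.1 (cone l (x j)) - μ.1 (cone l (x 0))
      = ν.1 (cone l (x j)) - ν.1 (cone l (x 0)) := fun j =>
    congrFun (congrArg Subtype.val (h n)) j
  have e1 := e i
  have e2 := e k
  linarith

theorem near_homeo [CompactSpace X] {x : ℕ → X} (hinj : Function.Injective x) (hx : DenseRange x)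
    {l l' : ℝ} (hl : 0 < l) (hll : l ≤ l') {ε : ℝ} (hε : 0 < ε) :
    ∃ H : Qs x l' ≃ₜ Qs x l, ∀ (μ : IdemMeasure X) (k : ℕ),
      |(H (pmap x l' (hl.le.trans hll) μ) : ℕ → ℝ) k - (pmap x l hl.le μ : ℕ → ℝ) k| ≤ ε := by
  have hl' : 0 < l' := hl.trans_le hll
  set δ : ℝ := ε / (8 * (l + l')) with hδ
  have hδ0 : 0 < δ := by positivity
  have hδ1 : (l + l') * δ = ε / 8 := by rw [hδ]; field_simp
  obtain ⟨N, hN1, hN⟩ := exists_net hx hδ0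
  have : Nontrivial (Fin (N+1)) := Fin.nontrivial_iff_two_le.2 (by omega)
  have hstr : ∀ i j k : ℕ, j ≠ i → j ≠ k → rho (x i) (x k) < rho (x i) (x j) + rho (x j) (x k) :=
    fun i j k h1 h2 => rho_strict (hinj.ne h1) (hinj.ne h2)
  have hsc := NearK.scale (ι := Fin (N+1)) (ρ := fun i j => rho (x i) (x j)) (l := l) (l' := l')
    (fun i => rho_self _) (fun i j => rho_nonneg _ _)
    (fun i j k h1 h2 => hstr i j k (by rwa [Ne, Fin.val_inj]) (by rwa [Ne, Fin.val_inj])) hl hll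
  obtain ⟨h, hh1, hh2, hh3⟩ := hsc (ε / 8) (by positivity)
  obtain ⟨B, hB⟩ := based_homeo 0 h hh1 hh2
  have hs : ∀ m : ℝ, 0 < m → ∀ i j k : ℕ, j ≠ i → j ≠ k →
      m * rho (x i) (x k) < m * rho (x i) (x j) + m * rho (x j) (x k) := by
    intro m hm i j k h1 h2
    have := mul_lt_mul_of_pos_left (hstr i j k h1 h2) hm
    linarith
  obtain ⟨S', hS'⟩ := split_homeo (c := fun i j : ℕ => l' * rho (x i) (x j))
    (fun i => by simp [rho_self]) (hs l' hl') N
  obtain ⟨S, hS⟩ := split_homeo (c := fun i j : ℕ => l * rho (x i) (x j))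
    (fun i => by simp [rho_self]) (hs l hl) N
  let H : Qs x l' ≃ₜ Qs x l := (S'.trans (B.prodCongr (Homeomorph.refl _))).trans S.symm
  refine ⟨H, fun μ => ?_⟩
  set P' := pmap x l' (hl.le.trans hll) μ with hP'
  set P := pmap x l hl.le μ with hP
  have hH : ∀ i : Fin (N+1), (H P' : ℕ → ℝ) i = h (S' P').1 i - h (S' P').1 0 := by
    intro i
    rw [← hS, ← hB]
    simp [H]
  set G' : Fin (N+1) → ℝ := fun k => μ.1 (cone l' (x k)) with hG'
  have hSP : ((S' P').1 : Fin (N+1) → ℝ) = fun i => G' i + (- μ.1 (cone l' (x 0))) := by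
    funext i
    rw [hS', hP', pmap_apply]
    ring
  have hH2 : ∀ i : Fin (N+1), (H P' : ℕ → ℝ) i = h G' i - h G' 0 := by
    intro i
    rw [hH, hSP, hh1]
    ring
  have hG'm : G' ∈ LipK (fun i j : Fin (N+1) => l' * rho (x i) (x j)) := fun i j =>
    μ.2.cone_lip hl'.le _ _
  have hcl : ∀ i : Fin (N+1), |h G' i - μ.1 (cone l (x i))| ≤ ε / 4 := by
    intro i
    have h1 := hh3 G' hG'm i
    have h2 := μ.2.supc_near hl.le hll hN i
    rw [hδ1] at h2
    have := abs_sub_le (h G' i) (supc (fun i j : Fin (N+1) => l * rho (x i) (x j)) G' i)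
      (μ.1 (cone l (x i)))
    linarith
  have hfin : ∀ i : Fin (N+1), |(H P' : ℕ → ℝ) i - (P : ℕ → ℝ) i| ≤ ε / 2 := by
    intro i
    rw [hH2, hP, pmap_apply]
    have h1 := abs_le.1 (hcl i)
    have h2 := abs_le.1 (hcl 0)
    rw [Fin.val_zero] at h2
    rw [abs_le]
    constructor <;> linarith [h1.1, h1.2, h2.1, h2.2]
  intro k
  obtain ⟨i, hi⟩ := hN (x k)
  have hlip : ∀ g : Qs x l, |(g : ℕ → ℝ) k - (g : ℕ → ℝ) i| ≤ ε / 8 := by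
    intro g
    have h1 := g.2.1 i k
    have h2 := g.2.1 k i
    beta_reduce at h2
    rw [rho_comm] at h2
    have h3 : l * rho (x i) (x k) ≤ ε / 8 := by
      rw [← hδ1]
      have := rho_nonneg (x i) (x k)
      gcongr
      linarith
    rw [abs_le]
    constructor <;> linarith
  have h1 := abs_le.1 (hlip (H P'))
  have h2 := abs_le.1 (hlip P)
  have h3 := abs_le.1 (hfin i)
  rw [abs_le]
  constructor <;> linarith [h1.1, h1.2, h2.1, h2.2, h3.1, h3.2]

theorem near_closure [CompactSpace X] {x : ℕ → X} (hinj : Function.Injective x)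
    (hx : DenseRange x) {l l' : ℝ} (hl : 0 < l) (hll : l ≤ l') :
    pmap x l hl.le ∈ closure (range fun h : Qs x l' ≃ₜ Qs x l =>
      (h : C(Qs x l', Qs x l)).comp (pmap x l' (hl.le.trans hll))) := by
  have : ∀ m : ℕ, ∃ H : Qs x l' ≃ₜ Qs x l, ∀ (μ : IdemMeasure X) (k : ℕ),
      |(H (pmap x l' (hl.le.trans hll) μ) : ℕ → ℝ) k - (pmap x l hl.le μ : ℕ → ℝ) k|
        ≤ 1 / ((m:ℝ) + 1) := fun m => near_homeo hinj hx hl hll (by positivity)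
  choose H hH using this
  have hcs : CompactSpace (IdemMeasure X) := idem_compact
  refine mem_closure_of_tendsto (b := Filter.atTop)
    (f := fun m => (H m : C(Qs x l', Qs x l)).comp (pmap x l' (hl.le.trans hll))) ?_
    (Filter.Eventually.of_forall fun m => ⟨H m, rfl⟩)
  rw [ContinuousMap.tendsto_iff_tendstoUniformly, tendstoUniformly_iff_tendsto,
    uniformity_subtype, Filter.tendsto_comap_iff, Pi.uniformity, Filter.tendsto_iInf]
  intro k
  rw [Filter.tendsto_comap_iff]
  have := (tendstoUniformly_iff_tendsto (p := Filter.atTop)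
    (F := fun (m : ℕ) (μ : IdemMeasure X) => (H m (pmap x l' (hl.le.trans hll) μ) : ℕ → ℝ) k)
    (f := fun μ => (pmap x l hl.le μ : ℕ → ℝ) k)).1 ?_
  · exact this
  rw [Metric.tendstoUniformly_iff]
  intro ε hε
  have ht := tendsto_one_div_add_atTop_nhds_zero_nat (𝕜 := ℝ)
  filter_upwards [ht.eventually (gt_mem_nhds hε)] with m hm μ
  rw [dist_comm, Real.dist_eq]
  exact (hH m μ k).trans_lt hm

theorem main_metric [CompactSpace X] [Infinite X] :
    Nonempty (IdemMeasure X ≃ₜ (ℕ → Set.Icc (0 : ℝ) 1)) := by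
  obtain ⟨x, hinj, hx⟩ := exists_seq (X := X)
  have hcs : CompactSpace (IdemMeasure X) := idem_compact
  have hcq : ∀ n : ℕ, CompactSpace (Qs x ((n:ℝ)+1)) := fun n =>
    isCompact_iff_compactSpace.1 LipB_isCompact
  obtain ⟨e⟩ := shrinkB (Q := fun n : ℕ => Qs x ((n:ℝ)+1))
    (fun n => pmap x ((n:ℝ)+1) (by positivity)) (fun n => pmap_surj _ _ _)
    (fun μ ν h => Subtype.ext (funext fun φ => le_antisymm (pmap_sep_le hx μ ν h φ)
      (pmap_sep_le hx ν μ (fun n => (h n).symm) φ)))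
    (fun n => near_closure hinj hx (by positivity) (by push_cast; linarith))
  obtain ⟨S, -⟩ := split_homeo (c := fun i j : ℕ => (((0:ℕ):ℝ)+1) * rho (x i) (x j))
    (fun i => by simp [rho_self]) (by
      intro i j k h1 h2
      have := rho_strict (hinj.ne h1) (hinj.ne h2)
      simpa using this) 0
  let U : Unique (LipB (fun i j : Fin (0+1) => (((0:ℕ):ℝ)+1) * rho (x i) (x j)) 0) :=
    { default := ⟨fun _ => 0, fun i j => by
        simpa using rho_nonneg _ _, rfl⟩
      uniq := by
        intro g
        apply Subtype.ext
        funext i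
        have : i = 0 := Fin.ext (by have := i.2; simp only [Fin.val_zero]; omega)
        rw [this]
        exact g.2.2 }
  exact ⟨(e.trans S).trans (Homeomorph.uniqueProd _ _)⟩

end Main

end Helpers

/-- For an infinite compact metrizable space `X`, the space `I(X)` of
idempotent probability measures with the weak* topology is homeomorphic to the Hilbert cube
`Q = ∏_{i=1}^∞ [0, 1]`. -/
theorem statement12 {X : Type*} [TopologicalSpace X] [CompactSpace X]
    [TopologicalSpace.MetrizableSpace X] [Infinite X] :
    Nonempty (IdemMeasure X ≃ₜ (ℕ → Set.Icc (0 : ℝ) 1)) := by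
  letI := TopologicalSpace.metrizableSpaceMetric X
  exact main_metric
end

section
/- There exist infinite compact metrizable spaces X and Y and a continuous open surjection f : X → Y such that every fiber f⁻¹(y), y ∈ Y, is infinite, and yet the induced map I(f) : I(X) → I(Y) is not a trivial Q-bundle: there is no homeomorphism H : I(X) → I(Y) × Q, where Q = ∏_{i=1}^∞ [0, 1] is the Hilbert cube, such that pr₁ ∘ H = I(f) (pr₁ being the projection I(Y) × Q → I(Y)). -/
/-- The pushforward `I(f) : I(X) → I(Y)` of functionals along a continuous map `f : X → Y`,
`I(f)(μ)(φ) = μ(φ ∘ f)`. -/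
def pushF {X Y : Type*} [TopologicalSpace X] [TopologicalSpace Y] (f : C(X, Y))
    (μ : C(X, ℝ) → ℝ) : C(Y, ℝ) → ℝ :=
  fun φ => μ (φ.comp f)

namespace IdemEx
open Finset
open scoped Classical in
/-- Sums over chains of functions not depending on the vertex `l` vanish mod 2. -/
lemma sum_skip_vertex {V G : Type*} [Group G] {n : ℕ} (S : Finset (Fin (n+1) → V)) (sg : V → G)
    (l m : Fin (n+1)) (hlm : l ≠ m)
    (inv : ∃ φ : (Fin (n+1) → V) → (Fin (n+1) → V), ∀ s ∈ S, φ s ∈ S ∧ φ s ≠ s ∧ φ (φ s) = s ∧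
      ∀ l', l' ≠ l → φ s l' = s l')
    (F : (Fin (n+1) → V) → ZMod 2) (hF : ∀ s s', (∀ l', l' ≠ l → s l' = s' l') → F s = F s') :
    ∑ s ∈ S.filter (fun s => sg (s m) = 1), F s = 0 := by
  obtain ⟨φ, hφ⟩ := inv
  refine Finset.sum_involution (fun s _ => φ s) ?_ ?_ ?_ ?_
  · intro s hs
    rw [mem_filter] at hs
    rw [hF (φ s) s (hφ s hs.1).2.2.2]
    exact CharTwo.add_self_eq_zero _
  · intro s hs _
    rw [mem_filter] at hs
    exact (hφ s hs.1).2.1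
  · intro s hs
    rw [mem_filter] at hs ⊢
    refine ⟨(hφ s hs.1).1, ?_⟩
    rw [(hφ s hs.1).2.2.2 m hlm.symm]
    exact hs.2
  · intro s hs
    rw [mem_filter] at hs
    exact (hφ s hs.1).2.2.1

open scoped Classical in
lemma sum_transversal {V G : Type*} [Group G] [MulAction G V] {n : ℕ}
    (S : Finset (Fin (n+1) → V)) (sg : V → G)
    (hS : ∀ (g : G), ∀ s ∈ S, g • s ∈ S)
    (hsg : ∀ (g : G), ∀ s ∈ S, ∀ l, sg (g • s l) = g * sg (s l))
    (m m' : Fin (n+1)) (F : (Fin (n+1) → V) → ZMod 2)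
    (hF : ∀ (g : G), ∀ s ∈ S, F (g • s) = F s) :
    ∑ s ∈ S.filter (fun s => sg (s m) = 1), F s = ∑ s ∈ S.filter (fun s => sg (s m') = 1), F s := by
  refine Finset.sum_nbij' (fun s => (sg (s m'))⁻¹ • s) (fun s => (sg (s m))⁻¹ • s) ?_ ?_ ?_ ?_ ?_
  · intro s hs
    rw [mem_filter] at hs ⊢
    refine ⟨hS _ _ hs.1, ?_⟩
    rw [Pi.smul_apply, hsg _ _ hs.1]; simp
  · intro s hs
    rw [mem_filter] at hs ⊢
    refine ⟨hS _ _ hs.1, ?_⟩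
    rw [Pi.smul_apply, hsg _ _ hs.1]; simp
  · intro s hs
    rw [mem_filter] at hs
    simp only [Pi.smul_apply]
    rw [hsg _ _ hs.1, hs.2]; simp
  · intro s hs
    rw [mem_filter] at hs
    simp only [Pi.smul_apply]
    rw [hsg _ _ hs.1, hs.2]; simp
  · intro s hs
    rw [mem_filter] at hs
    rw [hF _ _ hs.1]

open scoped Classical in
/-- one-step homotopy invariance -/
lemma sum_exchange {V G : Type*} [Group G] [MulAction G V] {n : ℕ}
    (S : Finset (Fin (n+1) → V)) (sg : V → G)
    (hS : ∀ (g : G), ∀ s ∈ S, g • s ∈ S)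
    (hsg : ∀ (g : G), ∀ s ∈ S, ∀ l, sg (g • s l) = g * sg (s l))
    (inv : ∀ l, ∃ φ : (Fin (n+1) → V) → (Fin (n+1) → V), ∀ s ∈ S, φ s ∈ S ∧ φ s ≠ s ∧
      φ (φ s) = s ∧ ∀ l', l' ≠ l → φ s l' = s l')
    (χ : Fin n → G → ZMod 2) (σ : Fin n → V → ZMod 2)
    (hσ : ∀ j g, ∀ s ∈ S, ∀ l, σ j (g • s l) = χ j g + σ j (s l))
    (j0 : Fin n) (m : Fin (n+1)) (τ : V → ZMod 2)
    (hτ : ∀ (g : G), ∀ s ∈ S, ∀ l, τ (g • s l) = τ (s l)) :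
    ∑ s ∈ S.filter (fun s => sg (s 0) = 1),
      τ (s m) * ∏ j ∈ univ.erase j0, (σ j (s j.castSucc) + σ j (s j.succ)) = 0 := by
  rw [sum_transversal S sg hS hsg 0 m]
  · simp_rw [Finset.prod_add, Finset.mul_sum]
    rw [Finset.sum_comm]
    refine Finset.sum_eq_zero fun T hT => ?_
    set ε : Fin n → Fin (n+1) := fun j => if j ∈ T then j.castSucc else j.succ with hε
    have hcard : (insert m ((univ.erase j0).image ε)).card < (univ : Finset (Fin (n+1))).card := by
      refine lt_of_le_of_lt (card_insert_le _ _) ?_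
      have h1 : ((univ.erase j0).image ε).card ≤ n - 1 := by
        refine card_image_le.trans ?_
        rw [card_erase_of_mem (mem_univ _)]; simp
      have : 0 < n := j0.pos
      simp only [card_univ, Fintype.card_fin]
      omega
    obtain ⟨l, -, hl⟩ := exists_mem_notMem_of_card_lt_card hcard
    simp only [mem_insert, mem_image, not_or, not_exists, not_and] at hl
    refine sum_skip_vertex S sg l m hl.1 (inv l) _ ?_
    intro s s' hss
    have e1 : s m = s' m := hss m (Ne.symm hl.1)
    rw [e1]
    congr 2
    · refine prod_congr rfl fun j hj => ?_
      rw [hss]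
      have := hl.2 j ((mem_powerset.1 hT) hj)
      simpa [hε, hj] using this
    · refine prod_congr rfl fun j hj => ?_
      rw [mem_sdiff] at hj
      rw [hss]
      have := hl.2 j hj.1
      simpa [hε, hj.2] using this
  · intro g s hs
    simp only [Pi.smul_apply]
    rw [hτ g s hs]
    congr 1
    refine prod_congr rfl fun j _ => ?_
    rw [hσ j g s hs, hσ j g s hs]
    have : χ j g + χ j g = 0 := CharTwo.add_self_eq_zero _
    linear_combination this

open scoped Classical in
/-- homotopy invariance of the count -/
lemma sum_invariant {V G : Type*} [Group G] [MulAction G V] {n : ℕ}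
    (S : Finset (Fin (n+1) → V)) (sg : V → G)
    (hS : ∀ (g : G), ∀ s ∈ S, g • s ∈ S)
    (hsg : ∀ (g : G), ∀ s ∈ S, ∀ l, sg (g • s l) = g * sg (s l))
    (inv : ∀ l, ∃ φ : (Fin (n+1) → V) → (Fin (n+1) → V), ∀ s ∈ S, φ s ∈ S ∧ φ s ≠ s ∧
      φ (φ s) = s ∧ ∀ l', l' ≠ l → φ s l' = s l')
    (χ : Fin n → G → ZMod 2) (σ σ' : Fin n → V → ZMod 2)
    (hσ : ∀ j g, ∀ s ∈ S, ∀ l, σ j (g • s l) = χ j g + σ j (s l))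
    (hσ' : ∀ j g, ∀ s ∈ S, ∀ l, σ' j (g • s l) = χ j g + σ' j (s l)) :
    ∑ s ∈ S.filter (fun s => sg (s 0) = 1), ∏ j, (σ j (s j.castSucc) + σ j (s j.succ)) =
    ∑ s ∈ S.filter (fun s => sg (s 0) = 1), ∏ j, (σ' j (s j.castSucc) + σ' j (s j.succ)) := by
  have key : ∀ A : Finset (Fin n), ∑ s ∈ S.filter (fun s => sg (s 0) = 1),
      ∏ j, ((if j ∈ A then σ j else σ' j) (s j.castSucc) +
        (if j ∈ A then σ j else σ' j) (s j.succ)) =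
      ∑ s ∈ S.filter (fun s => sg (s 0) = 1), ∏ j, (σ' j (s j.castSucc) + σ' j (s j.succ)) := by
    intro A
    induction A using Finset.induction_on with
    | empty => simp
    | insert a A ha ih =>
      rw [← ih, ← sub_eq_zero, ← Finset.sum_sub_distrib]
      have h1 := fun m => sum_exchange S sg hS hsg inv χ (fun j => if j ∈ A then σ j else σ' j)
        (by intro j g s hs l; split_ifs; exacts [hσ j g s hs l, hσ' j g s hs l])
        a m (fun v => σ a v - σ' a v)
        (by intro g s hs l; simp only [hσ a g s hs l, hσ' a g s hs l]; ring)
      have h2 := congrArg₂ (· + ·) (h1 a.castSucc) (h1 a.succ)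
      simp only [← Finset.sum_add_distrib, add_zero] at h2
      rw [← h2]
      refine sum_congr rfl fun s _ => ?_
      rw [← mul_prod_erase univ _ (mem_univ a), ← mul_prod_erase univ
        (fun j => ((if j ∈ A then σ j else σ' j) (s j.castSucc) +
        (if j ∈ A then σ j else σ' j) (s j.succ))) (mem_univ a)]
      have h3 : ∏ x ∈ univ.erase a, ((if x ∈ insert a A then σ x else σ' x) (s x.castSucc) +
          (if x ∈ insert a A then σ x else σ' x) (s x.succ)) =
          ∏ x ∈ univ.erase a, ((if x ∈ A then σ x else σ' x) (s x.castSucc) +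
          (if x ∈ A then σ x else σ' x) (s x.succ)) := by
        refine prod_congr rfl fun j hj => ?_
        have : j ≠ a := (mem_erase.1 hj).1
        simp [this]
      rw [h3]
      simp only [mem_insert_self, if_true, ha, if_false]
      ring
  simpa using key univ

end IdemEx

namespace IdemEx
open Finset

/-- index set of the coordinates -/
abbrev Ix (k : ℕ) := Σ i : Fin k, Fin (2^(i:ℕ)+1)

/-- integer vectors -/
abbrev Vt (k : ℕ) := Ix k → ℤ

/-- the action of the sign group -/
instance vtAction (k : ℕ) : MulAction (Fin k → ℤˣ) (Vt k) where
  smul g v := fun a => ((g a.1 : ℤˣ) : ℤ) * v a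
  one_smul v := by funext a; show ((1 : ℤˣ) : ℤ) * v a = v a; simp
  mul_smul g h v := by
    funext a
    show (((g a.1 * h a.1) : ℤˣ) : ℤ) * v a = (g a.1 : ℤ) * ((h a.1 : ℤ) * v a)
    push_cast; ring

lemma vt_smul_apply {k : ℕ} (g : Fin k → ℤˣ) (v : Vt k) (a : Ix k) :
    (g • v) a = ((g a.1 : ℤˣ) : ℤ) * v a := rfl

def Valid {k : ℕ} (M : ℤ) (v : Vt k) : Prop :=
  (∀ a, |v a| ≤ M) ∧ ∀ i, ∃ p, |v ⟨i, p⟩| = M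

def Step {k : ℕ} (u v : Vt k) : Prop :=
  ∃ a, Even (u a) ∧ (v a = u a + 1 ∨ v a = u a - 1) ∧ ∀ b, b ≠ a → v b = u b

structure IsCh {k n : ℕ} (M : ℤ) (s : Fin (n+1) → Vt k) : Prop where
  even0 : ∀ a, Even (s 0 a)
  step : ∀ j : Fin n, Step (s j.castSucc) (s j.succ)
  valid : ∀ j, Valid M (s j)

lemma IsCh.update {k n : ℕ} {M : ℤ} {s : Fin (n+1) → Vt k} (hs : IsCh M s) (l : Fin (n+1))
    (w : Vt k) (h0 : l = 0 → ∀ a, Even (w a))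
    (h1 : ∀ j : Fin n, j.succ = l → Step (s j.castSucc) w)
    (h2 : ∀ j : Fin n, j.castSucc = l → Step w (s j.succ))
    (hv : Valid M w) : IsCh M (Function.update s l w) := by
  refine ⟨?_, ?_, ?_⟩
  · by_cases h : l = 0
    · subst h; simpa using h0 rfl
    · rw [Function.update_of_ne (Ne.symm h)]; exact hs.even0
  · intro j
    by_cases ha : j.castSucc = l
    · have hb : j.succ ≠ l := by
        rw [← ha]; intro h; have := congrArg Fin.val h; simp at this
      rw [Function.update_of_ne hb, ha, Function.update_self]
      exact h2 j ha
    · rw [Function.update_of_ne ha]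
      by_cases hb : j.succ = l
      · rw [hb, Function.update_self]; exact h1 j hb
      · rw [Function.update_of_ne hb]; exact hs.step j
  · intro j
    by_cases h : j = l
    · subst h; simpa using hv
    · rw [Function.update_of_ne h]; exact hs.valid j

/-- existence of a partner vertex -/
def HasInv {k n : ℕ} (M : ℤ) (l : Fin (n+1)) : Prop :=
  ∃ φ : (Fin (n+1) → Vt k) → (Fin (n+1) → Vt k), ∀ s, IsCh M s → IsCh M (φ s) ∧ φ s ≠ s ∧
      φ (φ s) = s ∧ ∀ l', l' ≠ l → φ s l' = s l'

lemma hasInv_of {k n : ℕ} (M : ℤ) (l : Fin (n+1)) (W : (Fin (n+1) → Vt k) → Vt k)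
    (h1 : ∀ s, IsCh M s → IsCh M (Function.update s l (W s)))
    (h2 : ∀ s, IsCh M s → W s ≠ s l)
    (h3 : ∀ s, IsCh M s → W (Function.update s l (W s)) = s l) : HasInv (k := k) M l := by
  refine ⟨fun s => Function.update s l (W s), fun s hs => ⟨h1 s hs, ?_, ?_, ?_⟩⟩
  · intro h
    have := congrFun h l
    change Function.update s l (W s) l = s l at this
    rw [Function.update_self] at this
    exact h2 s hs this
  · show Function.update (Function.update s l (W s)) l (W (Function.update s l (W s))) = s
    rw [h3 s hs, Function.update_idem, Function.update_eq_self]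
  · intro l' hl'
    exact Function.update_of_ne hl' _ _

open scoped Classical in
lemma hasInv_of_unique {k n : ℕ} (M : ℤ) (l : Fin (n+1))
    (h : ∀ s : Fin (n+1) → Vt k, IsCh M s → ∃ w, w ≠ s l ∧ IsCh M (Function.update s l w) ∧
      ∀ w', IsCh M (Function.update s l w') → w' = w ∨ w' = s l) : HasInv (k := k) M l := by
  have : Nonempty (Vt k) := ⟨fun _ => 0⟩
  choose! W hW using h
  refine hasInv_of M l W (fun s hs => (hW s hs).2.1) (fun s hs => (hW s hs).1) ?_
  intro s hs
  obtain ⟨a1, a2, a3⟩ := hW s hs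
  obtain ⟨b1, b2, b3⟩ := hW _ a2
  rw [Function.update_self] at b1
  rw [Function.update_idem] at b2
  rcases a3 _ b2 with h | h
  · exact absurd h b1
  · exact h

/-- if `u` is a face of `v` and `v` is valid then `u` has the boundary property -/
lemma Valid.down {k : ℕ} {M : ℤ} (hM : Even M) {u v : Vt k} (hv : Valid M v)
    (h : ∀ a, u a = v a ∨ (Odd (v a) ∧ (u a = v a + 1 ∨ u a = v a - 1))) : Valid M u := by
  have hodd : ∀ a, Odd (v a) → |v a| ≠ M := by
    intro a ho he
    have : Even (v a) := by rw [← even_abs, he]; exact hM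
    exact (Int.not_even_iff_odd.2 ho) this
  refine ⟨fun a => ?_, fun i => ?_⟩
  · rcases h a with h | ⟨ho, h⟩
    · rw [h]; exact hv.1 a
    · have h1 := hv.1 a
      have h2 := hodd a ho
      rcases h with h | h <;> rw [h] <;> grind [abs_le, abs_eq]
  · obtain ⟨p, hp⟩ := hv.2 i
    refine ⟨p, ?_⟩
    rcases h ⟨i, p⟩ with h | ⟨ho, -⟩
    · rw [h]; exact hp
    · exact absurd hp (hodd _ ho)

lemma hasInv_zero {k n : ℕ} {M : ℤ} (hM : Even M) (hn : 0 < n) :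
    HasInv (k := k) (n := n) M 0 := by
  obtain ⟨n, rfl⟩ : ∃ n', n = n' + 1 := ⟨n - 1, by omega⟩
  have h10 : (1 : Fin (n+1+1)) ≠ 0 := by simp
  have key : ∀ s : Fin (n+1+1) → Vt k, IsCh M s → Step (s 0) (s 1) := fun s hs => by
    simpa using hs.step 0
  refine hasInv_of M 0 (fun s a => 2 * s 1 a - s 0 a) ?_ ?_ ?_
  · intro s hs
    obtain ⟨a, ha, hb, hc⟩ := key s hs
    have hstep : Step (fun a => 2 * s 1 a - s 0 a : Vt k) (s 1) := by
      refine ⟨a, ?_, ?_, ?_⟩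
      · grind
      · grind
      · intro b hb; have := hc b hb; grind
    refine hs.update 0 _ ?_ ?_ ?_ ?_
    · intro _ a
      have := hs.even0 a
      grind
    · intro j hj; exact absurd hj (Fin.succ_ne_zero j)
    · intro j hj
      have : j = 0 := by ext; simpa using congrArg Fin.val hj
      subst this
      exact hstep
    · refine (hs.valid 1).down hM ?_
      intro b
      by_cases hba : b = a
      · subst hba; grind
      · left; have := hc b hba; grind
  · intro s hs h
    obtain ⟨a, ha, hb, hc⟩ := key s hs
    have := congrFun h a
    grind
  · intro s hs
    funext a
    show 2 * (Function.update s 0 _ 1 : Vt k) a - (Function.update s 0 _ 0 : Vt k) a = _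
    rw [Function.update_self, Function.update_of_ne h10]
    ring

lemma hasInv_mid {k n : ℕ} {M : ℤ} (hM : Even M) (j j' : Fin n) (hj : j.succ = j'.castSucc) :
    HasInv (k := k) (n := n) M j.succ := by
  have n1 : j.castSucc ≠ j.succ := by
    intro h; have := congrArg Fin.val h; simp at this
  have n2 : j'.succ ≠ j.succ := by
    rw [hj]; intro h; have := congrArg Fin.val h; simp at this
  refine hasInv_of M j.succ (fun s a => s j.castSucc a + s j'.succ a - s j.succ a) ?_ ?_ ?_
  · intro s hs
    obtain ⟨a, ha, hb, hc⟩ := hs.step j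
    obtain ⟨a', ha', hb', hc'⟩ := hs.step j'
    rw [← hj] at ha' hb' hc'
    have hne : a ≠ a' := by rintro rfl; grind
    have e1 := hc a' (Ne.symm hne)
    have e2 := hc' a hne
    refine hs.update _ _ ?_ ?_ ?_ ?_
    · intro h; exact absurd h (Fin.succ_ne_zero j)
    · intro i hi
      rw [Fin.succ_inj] at hi; subst hi
      refine ⟨a', by grind, by grind, ?_⟩
      intro b hb
      have := hc' b hb
      grind
    · intro i hi
      rw [hj, Fin.castSucc_inj] at hi; subst hi
      refine ⟨a, by grind, by grind, ?_⟩
      intro b hb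
      have := hc b hb
      grind
    · refine (hs.valid j'.succ).down hM ?_
      intro b
      by_cases hba : b = a
      · subst hba; right; grind
      · have h1 := hc b hba
        by_cases hba' : b = a'
        · subst hba'; left; grind
        · have h2 := hc' b hba'; left; grind
  · intro s hs h
    obtain ⟨a, ha, hb, hc⟩ := hs.step j
    obtain ⟨a', ha', hb', hc'⟩ := hs.step j'
    rw [← hj] at ha' hb' hc'
    have := congrFun h a
    have hne : a ≠ a' := by rintro rfl; grind
    have e2 := hc' a hne
    grind
  · intro s hs
    funext a
    show (Function.update s j.succ _ j.castSucc : Vt k) a +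
      (Function.update s j.succ _ j'.succ : Vt k) a - (Function.update s j.succ _ j.succ : Vt k) a = _
    rw [Function.update_self, Function.update_of_ne n1, Function.update_of_ne n2]
    ring


open scoped Classical in
lemma IsCh.card_even {k n : ℕ} {M : ℤ} {s : Fin (n+1) → Vt k} (hs : IsCh M s) (j : Fin (n+1)) :
    (univ.filter (fun a => Even (s j a))).card + (j : ℕ) = Fintype.card (Ix k) := by
  induction j using Fin.induction with
  | zero =>
    rw [filter_true_of_mem (fun a _ => hs.even0 a)]
    simp only [card_univ, Fin.val_zero, add_zero]
  | succ j ih =>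
    obtain ⟨a, ha, hb, hc⟩ := hs.step j
    have : univ.filter (fun a => Even (s j.castSucc a)) =
        insert a (univ.filter (fun a => Even (s j.succ a))) := by
      ext b
      simp only [mem_filter, mem_univ, true_and, mem_insert]
      by_cases h : b = a
      · subst h; simp [ha]
      · simp [h, hc b h]
    rw [this, card_insert_of_notMem (by simp; grind)] at ih
    simp only [Fin.val_castSucc, Fin.val_succ] at ih ⊢
    omega

open scoped Classical in
lemma IsCh.even_unique {k n : ℕ} {M : ℤ} (hM : Even M) (hc : Fintype.card (Ix k) = n + k)
    {s : Fin (n+1) → Vt k} (hs : IsCh M s) (a b : Ix k) (ha : Even (s (Fin.last n) a))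
    (hb : Even (s (Fin.last n) b)) (hab : a.1 = b.1) : a = b := by
  have h := hs.card_even (Fin.last n)
  refine Finset.inj_on_of_surj_on_of_card_le (s := univ.filter (fun a => Even (s (Fin.last n) a)))
    (t := (univ : Finset (Fin k))) (fun a _ => a.1) (fun _ _ => mem_univ _) ?_ ?_
    (by simpa using ha) (by simpa using hb) hab
  · intro i _
    obtain ⟨p, hp⟩ := (hs.valid (Fin.last n)).2 i
    refine ⟨⟨i, p⟩, ?_, rfl⟩
    simp only [mem_filter, mem_univ, true_and]
    rw [← even_abs, hp]; exact hM
  · rw [hc] at h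
    simp only [Fin.val_last, card_univ, Fintype.card_fin] at h ⊢
    omega

open scoped Classical in
lemma hasInv_last {k n : ℕ} {M : ℤ} (hM : Even M) (hc : Fintype.card (Ix k) = n + k)
    (j : Fin n) (hj : j.succ = Fin.last n) : HasInv (k := k) (n := n) M j.succ := by
  have n1 : j.castSucc ≠ j.succ := by
    intro h; have := congrArg Fin.val h; simp at this
  have upd : ∀ s : Fin (n+1) → Vt k, IsCh M s → ∀ w, Step (s j.castSucc) w → Valid M w →
      IsCh M (Function.update s j.succ w) := by
    intro s hs w h1 h2
    refine hs.update _ _ ?_ ?_ ?_ h2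
    · intro h; exact absurd h (Fin.succ_ne_zero j)
    · intro i hi
      rw [Fin.succ_inj] at hi; subst hi; exact h1
    · intro i hi
      rw [hj] at hi; exact absurd hi (Fin.castSucc_lt_last i).ne
  have upd' : ∀ s : Fin (n+1) → Vt k, ∀ w, IsCh M (Function.update s j.succ w) →
      Step (s j.castSucc) w ∧ Valid M w := by
    intro s w h
    have h1 := h.step j
    have h2 := h.valid j.succ
    rw [Function.update_self] at h1 h2
    rw [Function.update_of_ne n1] at h1
    exact ⟨h1, h2⟩
  refine hasInv_of_unique M _ ?_
  intro s hs
  have hU := hs.even_unique hM hc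
  rw [← hj] at hU
  obtain ⟨a, ha, hb, hcc⟩ := hs.step j
  have hv := hs.valid j.succ
  set u := s j.castSucc
  set v := s j.succ
  have evM : ∀ c, |v c| = M → Even (v c) := fun c h => by rw [← even_abs, h]; exact hM
  obtain ⟨p, hp⟩ := hv.2 a.1
  have hba : (⟨a.1, p⟩ : Ix k) ≠ a := by
    intro h; rw [h] at hp; have := evM _ hp; grind
  set b : Ix k := ⟨a.1, p⟩ with hbdef
  have hb1 : b.1 = a.1 := rfl
  have hub : u b = v b := (hcc b hba).symm
  have hvb := evM b hp
  -- classification of the candidates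
  have cls : ∀ w', Step u w' → Valid M w' → (w' a = u a + 1 ∨ w' a = u a - 1) ∧
      (∀ c, c ≠ a → w' c = u c) ∨ |u a| = M ∧ (w' b = u b + 1 ∨ w' b = u b - 1) ∧
      (∀ c, c ≠ b → w' c = u c) := by
    rintro w' ⟨a2, h1, h2, h3⟩ hw
    by_cases h : a2 = a
    · subst h; left; exact ⟨h2, h3⟩
    · right
      obtain ⟨p', hp'⟩ := hw.2 a2.1
      have hne : (⟨a2.1, p'⟩ : Ix k) ≠ a2 := by
        intro h
        rw [h] at hp'
        have : Even (w' a2) := by rw [← even_abs, hp']; exact hM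
        grind
      have e1 := h3 _ hne
      have e2 : Even (v a2) := by rw [hcc a2 h]; exact h1
      by_cases h4 : (⟨a2.1, p'⟩ : Ix k) = a
      · have h5 : a2 = b := by
          refine hU _ _ e2 hvb ?_
          rw [hb1, ← h4]
        rw [h4] at hp' e1
        subst h5
        refine ⟨?_, h2, h3⟩
        rw [← e1]; exact hp'
      · exfalso
        refine hne (hU _ _ ?_ e2 rfl)
        rw [hcc _ h4, ← e1, ← even_abs, hp']; exact hM
  have hM0 : 0 < M := by
    have := hv.1 a
    rcases hb with h | h
    all_goals
      have h5 : Odd (v a) := by grind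
      have h6 : v a ≠ 0 := by rintro h; rw [h] at h5; simp at h5
      have := abs_pos.2 h6
      omega
  have other : ∀ (w : Vt k), (∀ c : Ix k, c.1 ≠ a.1 → w c = v c) → ∀ i, i ≠ a.1 →
      ∃ p, |w ⟨i, p⟩| = M := by
    intro w hw i hi
    obtain ⟨q, hq⟩ := hv.2 i
    exact ⟨q, by rw [hw _ hi]; exact hq⟩
  by_cases hua : |u a| = M
  · -- move at b
    refine ⟨Function.update u b (u b - Int.sign (u b)), ?_, ?_, ?_⟩
    · intro h
      have := congrFun h a
      rw [Function.update_of_ne hba.symm] at this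
      grind
    · refine upd s hs _ ⟨b, ?_, ?_, ?_⟩ ⟨?_, ?_⟩
      · show Even (u b); rw [hub]; exact hvb
      · rw [Function.update_self]
        show u b - (u b).sign = u b + 1 ∨ u b - (u b).sign = u b - 1
        have h0 : u b ≠ 0 := by intro h; rw [← hub, h] at hp; simp at hp; omega
        rcases lt_or_gt_of_ne h0 with h | h
        · left; rw [Int.sign_eq_neg_one_of_neg h]; ring
        · right; rw [Int.sign_eq_one_of_pos h]
      · intro c hc; rw [Function.update_of_ne hc]
      · intro c
        by_cases hcb : c = b
        · subst hcb; rw [Function.update_self]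
          rw [← hub] at hp
          rcases lt_trichotomy (u b) 0 with h | h | h
          · rw [Int.sign_eq_neg_one_of_neg h]; grind [abs_le, abs_eq]
          · rw [h] at hp; simp at hp; omega
          · rw [Int.sign_eq_one_of_pos h]; grind [abs_le, abs_eq]
        · rw [Function.update_of_ne hcb]; exact (hs.valid _).1 c
      · intro i
        by_cases hi : i = a.1
        · subst hi
          exact ⟨a.2, by rw [show (⟨a.1, a.2⟩ : Ix k) = a from rfl, Function.update_of_ne hba.symm]; exact hua⟩
        · refine other _ ?_ i hi
          intro c hc'
          rw [Function.update_of_ne (by rintro rfl; exact hc' rfl)]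
          exact (hcc c (by rintro rfl; exact hc' rfl)).symm
    · intro w' hw'
      obtain ⟨h1, h2⟩ := upd' s w' hw'
      rcases cls w' h1 h2 with ⟨h3, h4⟩ | ⟨h3, h4, h5⟩
      · right
        funext c
        by_cases h : c = a
        · subst h
          have g1 := h2.1 c
          have g2 := hv.1 c
          show w' c = v c
          clear_value u v
          clear hcc h4 cls
          rw [abs_le] at g1 g2
          rcases abs_eq hM0.le |>.1 hua with e | e <;> omega
        · rw [h4 c h]; exact (hcc c h).symm
      · left
        funext c
        by_cases h : c = b
        · subst h
          rw [Function.update_self]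
          have g1 := h2.1 b
          rw [← hub] at hp
          rw [abs_le] at g1
          rcases abs_eq hM0.le |>.1 hp with e | e
          · rw [Int.sign_eq_one_of_pos (by omega)]; omega
          · rw [Int.sign_eq_neg_one_of_neg (by omega)]; omega
        · rw [h5 c h, Function.update_of_ne h]
  · -- reflect at a
    refine ⟨Function.update u a (2 * u a - v a), ?_, ?_, ?_⟩
    · intro h
      have := congrFun h a
      rw [Function.update_self] at this
      change 2 * u a - v a = v a at this
      omega
    · refine upd s hs _ ⟨a, ha, ?_, ?_⟩ ⟨?_, ?_⟩
      · rw [Function.update_self]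
        show 2 * u a - v a = u a + 1 ∨ 2 * u a - v a = u a - 1
        omega
      · intro c hc; rw [Function.update_of_ne hc]
      · intro c
        by_cases hca : c = a
        · subst hca; rw [Function.update_self]
          have g := (hs.valid j.castSucc).1 c
          change |u c| ≤ M at g
          have g' : |u c| < M := lt_of_le_of_ne g hua
          rw [abs_lt] at g'
          rw [abs_le]
          omega
        · rw [Function.update_of_ne hca]; exact (hs.valid _).1 c
      · intro i
        by_cases hi : i = a.1
        · subst hi
          refine ⟨p, ?_⟩
          rw [Function.update_of_ne hba]
          rw [← hub] at hp; exact hp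
        · refine other _ ?_ i hi
          intro c hc'
          have : c ≠ a := by rintro rfl; exact hc' rfl
          rw [Function.update_of_ne this]
          exact (hcc c this).symm
    · intro w' hw'
      obtain ⟨h1, h2⟩ := upd' s w' hw'
      rcases cls w' h1 h2 with ⟨h3, h4⟩ | ⟨h3, h4, h5⟩
      · have : w' a = v a ∨ w' a = 2 * u a - v a := by omega
        rcases this with h | h
        · right
          funext c
          by_cases hca : c = a
          · subst hca; exact h
          · rw [h4 c hca]; exact (hcc c hca).symm
        · left
          funext c
          by_cases hca : c = a
          · subst hca; rw [Function.update_self]; exact h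
          · rw [h4 c hca, Function.update_of_ne hca]
      · exact absurd h3 hua

lemma hasInv_all {k n : ℕ} {M : ℤ} (hM : Even M) (hc : Fintype.card (Ix k) = n + k) (hn : 0 < n)
    (l : Fin (n+1)) : HasInv (k := k) M l := by
  induction l using Fin.cases with
  | zero => exact hasInv_zero hM hn
  | succ j =>
    by_cases h : j.succ = Fin.last n
    · exact hasInv_last hM hc j h
    · have : (j : ℕ) + 1 < n := by
        have h1 : ((j.succ : Fin (n+1)) : ℕ) ≠ n := fun h' => h (Fin.ext h')
        have := j.2
        simp at h1
        omega
      exact hasInv_mid hM j ⟨j+1, this⟩ (by ext; simp)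

lemma card_Ix (k : ℕ) : Fintype.card (Ix k) = (2^k - 1) + k := by
  rw [Fintype.card_sigma]
  simp only [Fintype.card_fin]
  rw [Finset.sum_add_distrib, Fin.sum_univ_eq_sum_range (fun i => 2^i) k]
  have := Nat.geomSum_eq (le_refl 2) k
  simp at this
  simp [this]

end IdemEx

namespace IdemEx
open Finset

/-- last nonzero entry of a block -/
noncomputable def fl {k : ℕ} (v : Vt k) (i : Fin k) : Fin (2^(i:ℕ)+1) :=
  (univ.filter (fun p => v ⟨i, p⟩ ≠ 0)).sup id

lemma fl_spec {k : ℕ} (v : Vt k) (i : Fin k) (h : ∃ p, v ⟨i, p⟩ ≠ 0) : v ⟨i, fl v i⟩ ≠ 0 := by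
  obtain ⟨p, hp⟩ := h
  obtain ⟨q, hq, he⟩ := Finset.exists_mem_eq_sup (univ.filter (fun p => v ⟨i, p⟩ ≠ 0))
    ⟨p, by simpa using hp⟩ id
  rw [fl, he]
  simpa using hq

lemma eq_zero_of_fl_lt {k : ℕ} (v : Vt k) (i : Fin k) (p) (h : fl v i < p) : v ⟨i, p⟩ = 0 := by
  by_contra hp
  have : p ≤ fl v i := Finset.le_sup (f := id) (by simpa using hp)
  exact absurd h (not_lt.2 this)

lemma fl_eq {k : ℕ} (v : Vt k) (i : Fin k) (p) (h : v ⟨i, p⟩ ≠ 0)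
    (h' : ∀ q, p < q → v ⟨i, q⟩ = 0) : fl v i = p := by
  refine le_antisymm ?_ (Finset.le_sup (f := id) (by simpa using h))
  by_contra hc
  exact fl_spec v i ⟨p, h⟩ (h' _ (not_le.1 hc))

lemma fl_congr {k : ℕ} (u v : Vt k) (i : Fin k) (h : ∀ p, u ⟨i, p⟩ = 0 ↔ v ⟨i, p⟩ = 0) :
    fl u i = fl v i := by
  unfold fl
  congr 1
  ext p
  simp [h]

/-- sign of the last nonzero entry -/
noncomputable def sg {k : ℕ} (v : Vt k) (i : Fin k) : ℤˣ := if v ⟨i, fl v i⟩ < 0 then -1 else 1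

lemma sg_congr {k : ℕ} (u v : Vt k) (i : Fin k) (h : ∀ p, u ⟨i, p⟩ = v ⟨i, p⟩) :
    sg u i = sg v i := by
  unfold sg
  rw [fl_congr u v i (fun p => by rw [h]), h]

lemma Valid.ex {k : ℕ} {M : ℤ} (hM : 0 < M) {v : Vt k} (hv : Valid M v) (i : Fin k) :
    ∃ p, v ⟨i, p⟩ ≠ 0 := by
  obtain ⟨p, hp⟩ := hv.2 i
  exact ⟨p, by intro h; rw [h] at hp; simp at hp; omega⟩

lemma Valid.smul {k : ℕ} {M : ℤ} {v : Vt k} (hv : Valid M v) (g : Fin k → ℤˣ) :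
    Valid M (g • v) := by
  have h : ∀ a, |(g • v) a| = |v a| := fun a => by
    rw [vt_smul_apply, abs_mul]
    rcases Int.units_eq_one_or (g a.1) with h | h <;> simp [h]
  exact ⟨fun a => by rw [h]; exact hv.1 a, fun i => by
    obtain ⟨p, hp⟩ := hv.2 i; exact ⟨p, by rw [h]; exact hp⟩⟩

lemma sg_smul {k : ℕ} {M : ℤ} (hM : 0 < M) {v : Vt k} (hv : Valid M v) (g : Fin k → ℤˣ) :
    sg (g • v) = g * sg v := by
  funext i
  have hf : fl (g • v) i = fl v i := fl_congr _ _ _ (fun p => by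
    rw [vt_smul_apply]; simp)
  have h0 := fl_spec v i (hv.ex hM i)
  rw [Pi.mul_apply]
  unfold sg
  rw [hf, vt_smul_apply]
  rcases Int.units_eq_one_or (g i) with h | h
  · simp [h]
  · rcases lt_or_gt_of_ne h0 with h1 | h1
    · simp [h, h1, h1.le]
    · simp [h, h1, h1.le]

lemma Step.smul {k : ℕ} {u v : Vt k} (h : Step u v) (g : Fin k → ℤˣ) : Step (g • u) (g • v) := by
  obtain ⟨a, h1, h2, h3⟩ := h
  refine ⟨a, ?_, ?_, ?_⟩
  · rw [vt_smul_apply]; exact h1.mul_left _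
  · simp only [vt_smul_apply]
    rcases Int.units_eq_one_or (g a.1) with h | h
    · simpa [h] using h2
    · simp only [h]; push_cast; omega
  · intro b hb; simp only [vt_smul_apply, h3 b hb]

lemma IsCh.smul {k n : ℕ} {M : ℤ} {s : Fin (n+1) → Vt k} (hs : IsCh M s) (g : Fin k → ℤˣ) :
    IsCh M (g • s) :=
  ⟨fun a => by
    rw [Pi.smul_apply, vt_smul_apply]; exact (hs.even0 a).mul_left _,
   fun j => (hs.step j).smul g, fun j => (hs.valid j).smul g⟩

/-- additive version of the sign -/
def bt (x : ℤˣ) : ZMod 2 := if x = 1 then 0 else 1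

lemma bt_mul (x y : ℤˣ) : bt (x * y) = bt x + bt y := by
  rcases Int.units_eq_one_or x with rfl | rfl <;> rcases Int.units_eq_one_or y with rfl | rfl <;> decide

/-- the j-th nonempty subset -/
def AA (k : ℕ) (j : ℕ) : Finset (Fin k) := univ.filter (fun i => (j+1).testBit (i:ℕ))

def chi {k : ℕ} (j : ℕ) (g : Fin k → ℤˣ) : ZMod 2 := ∑ i ∈ AA k j, bt (g i)

lemma chi_mul {k : ℕ} (j : ℕ) (g h : Fin k → ℤˣ) : chi j (g * h) = chi j g + chi j h := by
  simp [chi, bt_mul, sum_add_distrib]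

lemma chi_ne {k : ℕ} (j : ℕ) (g h : Fin k → ℤˣ) (i0 : Fin k) (hgh : ∀ i, i ≠ i0 → g i = h i) :
    chi j g + chi j h ≠ 0 ↔ i0 ∈ AA k j ∧ g i0 ≠ h i0 := by
  have key : chi j g + chi j h = if i0 ∈ AA k j then bt (g i0) + bt (h i0) else 0 := by
    rw [chi, chi, ← sum_add_distrib]
    split_ifs with hi
    · refine sum_eq_single_of_mem i0 hi ?_
      intro i _ hne
      rw [hgh i hne]; exact CharTwo.add_self_eq_zero _
    · refine sum_eq_zero fun i hi' => ?_
      rw [hgh i (by rintro rfl; exact hi hi')]; exact CharTwo.add_self_eq_zero _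
  rw [key]
  split_ifs with hi
  · simp only [hi, true_and]
    rcases Int.units_eq_one_or (g i0) with h1 | h1 <;> rcases Int.units_eq_one_or (h i0) with h2 | h2 <;>
      rw [h1, h2] <;> decide
  · simp [hi]

/-- analysis of a sign flip -/
lemma flip {k : ℕ} {M : ℤ} (hM : 0 < M) {u v : Vt k} (hu : Valid M u) (i : Fin k)
    (p : Fin (2^(i:ℕ)+1)) (ha : Even (u ⟨i,p⟩))
    (hb : v ⟨i,p⟩ = u ⟨i,p⟩ + 1 ∨ v ⟨i,p⟩ = u ⟨i,p⟩ - 1) (hc : ∀ b, b ≠ ⟨i,p⟩ → v b = u b)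
    (hne : sg u i ≠ sg v i) :
    fl u i < p ∧ fl v i = p ∧ u ⟨i,p⟩ = 0 ∧ v ⟨i,p⟩ = - (sg u i : ℤ) := by
  have h0 := fl_spec u i (hu.ex hM i)
  have hc' : ∀ q, q ≠ p → v ⟨i,q⟩ = u ⟨i,q⟩ := fun q hq => hc _ (by
    intro h; apply hq; simpa using h)
  have hodd : v ⟨i,p⟩ ≠ 0 := by grind
  rcases lt_trichotomy p (fl u i) with h | h | h
  · exfalso; apply hne
    have : fl v i = fl u i := fl_eq _ _ _ (by rw [hc' _ h.ne']; exact h0) (fun q hq => by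
      rw [hc' _ (h.trans hq).ne']; exact eq_zero_of_fl_lt _ _ _ hq)
    unfold sg
    rw [this, hc' _ h.ne']
  · exfalso; apply hne
    have : fl v i = p := fl_eq _ _ _ hodd (fun q hq => by
      rw [hc' _ hq.ne']; exact eq_zero_of_fl_lt _ _ _ (h ▸ hq))
    unfold sg
    rw [this, ← h]
    rw [← h] at h0
    have : u ⟨i,p⟩ < 0 ↔ v ⟨i,p⟩ < 0 := by grind
    simp only [this]
  · have h1 : fl v i = p := fl_eq _ _ _ hodd (fun q hq => by
      rw [hc' _ hq.ne']; exact eq_zero_of_fl_lt _ _ _ (h.trans hq))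
    have h2 := eq_zero_of_fl_lt _ _ _ h
    refine ⟨h, h1, h2, ?_⟩
    rw [h2] at hb
    have h3 : sg v i = if v ⟨i,p⟩ < 0 then -1 else 1 := by unfold sg; rw [h1]
    rcases hb with e | e
    · rw [e] at h3; norm_num at h3
      rw [h3] at hne
      rcases Int.units_eq_one_or (sg u i) with h | h
      · exact absurd h hne
      · rw [e, h]; simp
    · rw [e] at h3; norm_num at h3
      rw [h3] at hne
      rcases Int.units_eq_one_or (sg u i) with h | h
      · rw [e, h]; simp
      · exact absurd h hne

/-- the model chain -/
def ft (t i : ℕ) : ℕ := min (2^i) (t + 1 - 2^i)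

def star (k : ℕ) (M : ℤ) (t : ℕ) : Vt k := fun a =>
  if (a.2 : ℕ) = 0 then M else if (a.2 : ℕ) ≤ ft t a.1 then (-1)^(a.2:ℕ) else 0

lemma ft_succ (t i : ℕ) : ft (t+1) i = if i = Nat.log 2 (t+1) then ft t i + 1 else ft t i := by
  have hp : 0 < 2^i := by positivity
  have e : 2^(i+1) = 2 * 2^i := by ring
  unfold ft
  split_ifs with h
  · have h1 : 2^i ≤ t + 1 := by rw [h]; exact Nat.pow_log_le_self 2 (by omega)
    have h2 : t + 1 < 2^(i+1) := by rw [h]; exact Nat.lt_pow_succ_log_self (by omega) _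
    omega
  · by_contra hcon
    apply h
    symm
    rw [Nat.log_eq_iff (by simp)]
    omega

lemma ft_log (t : ℕ) : ft t (Nat.log 2 (t+1)) < 2^(Nat.log 2 (t+1)) := by
  have h1 : 2^(Nat.log 2 (t+1)) ≤ t + 1 := Nat.pow_log_le_self 2 (by omega)
  have h2 : t + 1 < 2^(Nat.log 2 (t+1)+1) := Nat.lt_pow_succ_log_self (by omega) _
  have e : 2^(Nat.log 2 (t+1)+1) = 2 * 2^(Nat.log 2 (t+1)) := by ring
  unfold ft
  omega

lemma log_of (t i : ℕ) (h1 : 2^i ≤ t+1) (h2 : ft t i < 2^i) : i = Nat.log 2 (t+1) := by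
  have e : 2^(i+1) = 2 * 2^i := by ring
  symm
  rw [Nat.log_eq_iff (by simp)]
  unfold ft at h2
  omega

lemma fl_star (k : ℕ) {M : ℤ} (hM : 0 < M) (t : ℕ) (i : Fin k) :
    (fl (star k M t) i : ℕ) = ft t i := by
  have hle : ft t i < 2^(i:ℕ)+1 := Nat.lt_succ_of_le (min_le_left _ _)
  have : fl (star k M t) i = ⟨ft t i, hle⟩ := by
    refine fl_eq _ _ _ ?_ ?_
    · unfold star
      dsimp only
      split_ifs with h
      · omega
      · exact pow_ne_zero _ (by norm_num)
      · omega
    · intro q hq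
      have hq : ft t i < (q : ℕ) := hq
      unfold star
      dsimp only
      rw [if_neg (by omega), if_neg (by omega)]
  rw [this]

lemma sg_star (k : ℕ) {M : ℤ} (hM : 0 < M) (t : ℕ) (i : Fin k) :
    sg (star k M t) i = (-1)^(ft t i) := by
  unfold sg
  have h := fl_star k hM t i
  have h2 : star k M t ⟨i, fl (star k M t) i⟩ = if ft t i = 0 then M else (-1)^(ft t i) := by
    show (if ((fl (star k M t) i : Fin _) : ℕ) = 0 then M else
      if ((fl (star k M t) i : Fin _) : ℕ) ≤ ft t i then
        (-1)^((fl (star k M t) i : Fin _) : ℕ) else 0) = _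
    rw [h]
    simp
  rw [h2]
  by_cases h0 : ft t i = 0
  · simp [h0, hM.le]
  · rw [if_neg h0]
    rcases Nat.even_or_odd (ft t i) with h | h
    · simp [h.neg_one_pow]
    · simp [h.neg_one_pow]

lemma star_valid (k : ℕ) {M : ℤ} (hM : 0 < M) (t : ℕ) : Valid M (star k M t) := by
  refine ⟨fun a => ?_, fun i => ⟨0, ?_⟩⟩
  · unfold star
    split_ifs
    · rw [abs_of_pos hM]
    · rw [abs_pow]; simp; omega
    · simpa using hM.le
  · simp [star, abs_of_pos hM]

lemma star_step (k : ℕ) {M : ℤ} (t : ℕ) (ht : t + 1 < 2^k) :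
    Step (star k M t) (star k M (t+1)) := by
  have hk : Nat.log 2 (t+1) < k := Nat.log_lt_of_lt_pow (by omega) ht
  have hlt := ft_log t
  refine ⟨⟨⟨Nat.log 2 (t+1), hk⟩, ⟨ft t (Nat.log 2 (t+1)) + 1, by simpa using hlt⟩⟩, ?_, ?_, ?_⟩
  · simp [star]
  · simp only [star, ft_succ]
    simp only [Nat.add_eq_zero_iff, one_ne_zero, and_false, if_false, if_true, le_refl]
    rw [if_neg (by omega)]
    rcases neg_one_pow_eq_or ℤ (ft t (Nat.log 2 (t+1)) + 1) with h | h <;> rw [h] <;> simp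
  · rintro ⟨i, p⟩ hb
    simp only [star, ft_succ]
    by_cases h0 : (p : ℕ) = 0
    · simp [h0]
    simp only [h0, if_false]
    split_ifs with h1 h2 h3 h4
    · rfl
    · exfalso
      apply hb
      obtain ⟨i, hi⟩ := i
      dsimp only at h2 h1 p
      subst h1
      have : p = ⟨ft t (Nat.log 2 (t+1)) + 1, by simpa using hlt⟩ := by
        ext; simp only; simp only at h3; omega
      rw [this]
    all_goals first | rfl | omega

lemma star_isCh (k n : ℕ) {M : ℤ} (hM : 0 < M) (hMe : Even M) (hn : n + 1 = 2^k) :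
    IsCh (n := n) M (fun t => star k M t) := by
  refine ⟨?_, ?_, fun j => star_valid k hM _⟩
  · intro a
    have : ft 0 a.1 = 0 := by
      unfold ft; have : 0 < 2^(a.1:ℕ) := by positivity
      omega
    simp only [star, Fin.val_zero, this]
    split_ifs
    · exact hMe
    · omega
    · simp
  · intro j
    have := star_step (M := M) k j (by omega)
    simpa using this

lemma sum_two_pow (k : ℕ) : ∑ i : Fin k, 2^(i:ℕ) + 1 = 2^k := by
  rw [Fin.sum_univ_eq_sum_range (fun i => 2^i) k]
  have := Nat.geomSum_eq (le_refl 2) k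
  have h : 0 < 2^k := by positivity
  simp only [Nat.add_one_sub_one, Nat.div_one] at this
  omega

lemma star_prod (k n : ℕ) {M : ℤ} (hM : 0 < M) (hn : n + 1 = 2^k) (j : Fin n) :
    chi j (sg (star k M j)) + chi j (sg (star k M (j+1))) ≠ 0 := by
  have hk : Nat.log 2 ((j:ℕ)+1) < k := Nat.log_lt_of_lt_pow (by omega) (by omega)
  refine (chi_ne _ _ _ ⟨Nat.log 2 (j+1), hk⟩ ?_).2 ⟨?_, ?_⟩
  · intro i hi
    rw [sg_star k hM, sg_star k hM, ft_succ, if_neg]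
    intro h; apply hi; ext; exact h
  · simp only [AA, mem_filter, mem_univ, true_and]
    have h1 : 2^(Nat.log 2 ((j:ℕ)+1)) ≤ (j:ℕ) + 1 := Nat.pow_log_le_self 2 (by omega)
    have h2 : (j:ℕ) + 1 < 2^(Nat.log 2 ((j:ℕ)+1)+1) := Nat.lt_pow_succ_log_self (by omega) _
    rw [Nat.testBit_eq_decide_div_mod_eq]
    have : ((j:ℕ)+1) / 2^(Nat.log 2 ((j:ℕ)+1)) = 1 := by
      rw [Nat.div_eq_iff (by positivity)]
      have e : 2^(Nat.log 2 ((j:ℕ)+1)+1) = 2 * 2^(Nat.log 2 ((j:ℕ)+1)) := by ring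
      omega
    rw [this]; simp
  · rw [sg_star k hM, sg_star k hM, ft_succ, if_pos rfl, pow_succ]
    simp only
    rcases Int.units_eq_one_or ((-1)^(ft j (Nat.log 2 (j+1)))) with h | h <;> rw [h] <;> decide

lemma star_unique (k n : ℕ) {M : ℤ} (hM : 0 < M) (hn : n + 1 = 2^k)
    {s : Fin (n+1) → Vt k} (hs : IsCh M s) (h1 : sg (s 0) = 1)
    (hp : ∀ j : Fin n, chi j (sg (s j.castSucc)) + chi j (sg (s j.succ)) ≠ 0) :
    s = fun t : Fin (n+1) => star k M (t : ℕ) := by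
  -- data at each step
  have data : ∀ j : Fin n, ∃ (i : Fin k) (p : Fin (2^(i:ℕ)+1)), i ∈ AA k j ∧
      fl (s j.castSucc) i < p ∧ fl (s j.succ) i = p ∧ s j.castSucc ⟨i,p⟩ = 0 ∧
      s j.succ ⟨i,p⟩ = - (sg (s j.castSucc) i : ℤ) ∧
      (∀ b, b ≠ ⟨i,p⟩ → s j.succ b = s j.castSucc b) := by
    intro j
    obtain ⟨⟨i, p⟩, ha, hb, hc⟩ := hs.step j
    have h := (chi_ne j (sg (s j.castSucc)) (sg (s j.succ)) i ?_).1 (hp j)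
    · obtain ⟨g1, g2, g3, g4⟩ := flip hM (hs.valid j.castSucc) i p ha hb hc h.2
      exact ⟨i, p, h.1, g1, g2, g3, g4, hc⟩
    · intro i' hi'
      refine sg_congr _ _ _ fun q => (hc _ ?_).symm
      intro h; apply hi'; exact congrArg Sigma.fst h
  have flo : ∀ (u v : Vt k) (i : Fin k) (p : Fin (2^(i:ℕ)+1)), (∀ b, b ≠ ⟨i,p⟩ → v b = u b) →
      ∀ i', i' ≠ i → fl v i' = fl u i' := by
    intro u v i p h i' hi'
    refine fl_congr _ _ _ fun q => ?_
    rw [h _ (by intro h; apply hi'; exact congrArg Sigma.fst h)]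
  set Φ : Fin (n+1) → ℕ := fun t => ∑ i, (fl (s t) i : ℕ) with hΦ
  have hinc : ∀ j : Fin n, ∀ i p, fl (s j.succ) i = p →
      (∀ b, b ≠ ⟨i,p⟩ → s j.succ b = s j.castSucc b) →
      Φ j.succ + (fl (s j.castSucc) i : ℕ) = Φ j.castSucc + p := by
    intro j i p h1 h2
    simp only [hΦ]
    rw [← add_sum_erase univ (fun i => (fl (s j.succ) i : ℕ)) (mem_univ i),
      ← add_sum_erase univ (fun i => (fl (s j.castSucc) i : ℕ)) (mem_univ i), h1]
    have : ∑ x ∈ univ.erase i, (fl (s j.succ) x : ℕ) = ∑ x ∈ univ.erase i, (fl (s j.castSucc) x : ℕ) := by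
      refine sum_congr rfl fun x hx => ?_
      rw [flo _ _ i p h2 x (mem_erase.1 hx).1]
    rw [this]; ring
  have hmono : ∀ j : Fin n, Φ j.castSucc + 1 ≤ Φ j.succ := by
    intro j
    obtain ⟨i, p, -, g1, g2, -, -, hc⟩ := data j
    have := hinc j i p g2 hc
    have g1 : (fl (s j.castSucc) i : ℕ) < p := g1
    omega
  have hub : ∀ t, Φ t ≤ n := by
    intro t
    have := sum_two_pow k
    have h2 : Φ t ≤ ∑ i : Fin k, 2^(i:ℕ) := sum_le_sum fun i _ => Nat.lt_succ_iff.1 (fl (s t) i).2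
    omega
  have hlow : ∀ t : Fin (n+1), (t : ℕ) ≤ Φ t := by
    intro t
    induction t using Fin.induction with
    | zero => simp
    | succ j ih =>
      have := hmono j
      simp only [Fin.val_succ, Fin.val_castSucc] at ih ⊢
      omega
  have hup : ∀ t : Fin (n+1), Φ t ≤ t := by
    intro t
    induction t using Fin.reverseInduction with
    | last => simpa using hub (Fin.last n)
    | cast j ih =>
      have := hmono j
      simp only [Fin.val_succ, Fin.val_castSucc] at ih ⊢
      omega
  have hΦt : ∀ t : Fin (n+1), Φ t = t := fun t => le_antisymm (hup t) (hlow t)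
  funext t
  induction t using Fin.induction with
  | zero =>
    have h0 := hΦt 0
    simp only [hΦ, Fin.val_zero, sum_eq_zero_iff, mem_univ, true_implies] at h0
    funext ⟨i, p⟩
    have hft : ft 0 i = 0 := by
      unfold ft; have : 0 < 2^(i:ℕ) := by positivity
      omega
    have hz : ∀ p, p ≠ 0 → s 0 ⟨i, p⟩ = 0 := by
      intro p hp
      apply eq_zero_of_fl_lt
      show (fl (s 0) i : ℕ) < p
      rw [h0 i]
      exact Fin.pos_iff_ne_zero.2 hp
    by_cases h : p = 0
    · subst h
      have hfl : fl (s 0) i = 0 := Fin.ext (h0 i)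
      have hsgn := congrFun h1 i
      unfold sg at hsgn
      rw [hfl] at hsgn
      have hnn : 0 ≤ s 0 ⟨i, 0⟩ := by
        by_contra hlt
        rw [if_pos (not_le.1 hlt)] at hsgn
        exact absurd hsgn (by rw [Pi.one_apply]; decide)
      obtain ⟨q, hq⟩ := (hs.valid 0).2 i
      have : q = 0 := by
        by_contra hq0
        rw [hz q hq0] at hq
        simp at hq; omega
      subst this
      rw [abs_of_nonneg hnn] at hq
      simp [star, hq]
    · have : (p : ℕ) ≠ 0 := fun h' => h (Fin.ext h')
      rw [hz p h]
      have hnp : ¬ ((p : ℕ) ≤ ft 0 i) := by omega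
      simp [star, hnp, h]
  | succ j ih =>
    obtain ⟨i, p, hA, g1, g2, g3, g4, hc⟩ := data j
    have e1 := hinc j i p g2 hc
    have e2 := hΦt j.succ
    have e3 := hΦt j.castSucc
    simp only [Fin.val_succ, Fin.val_castSucc] at e2 e3 ih
    rw [ih] at e1 g1 g4
    rw [fl_star k hM] at e1
    rw [sg_star k hM] at g4
    have hpf : (p : ℕ) = ft j i + 1 := by omega
    have hp2 : (p : ℕ) < 2^(i:ℕ) + 1 := p.2
    have hge : 2^(i:ℕ) ≤ (j:ℕ) + 1 := by
      simp only [AA, mem_filter, mem_univ, true_and] at hA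
      exact Nat.ge_two_pow_of_testBit hA
    have hi := log_of j i hge (by omega)
    funext ⟨i', p'⟩
    rw [Fin.val_succ]
    by_cases hb : (⟨i', p'⟩ : Ix k) = ⟨i, p⟩
    · obtain rfl : i' = i := congrArg Sigma.fst hb
      have : p' = p := by simpa using hb
      subst this
      rw [g4]
      simp only [star, ft_succ]
      rw [if_neg (by omega), if_pos hi, if_pos (by omega), hpf, pow_succ]
      push_cast; ring
    · rw [hc _ hb, ih]
      simp only [star, ft_succ]
      by_cases h0 : (p' : ℕ) = 0
      · simp [h0]
      simp only [h0, if_false]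
      by_cases hii : (i' : ℕ) = Nat.log 2 (j+1)
      · have : i' = i := by ext; omega
        subst this
        have hpp : (p' : ℕ) ≠ p := by
          intro h; apply hb; rw [Fin.ext h]
        rw [if_pos hii]
        by_cases h : (p' : ℕ) ≤ ft j i'
        · rw [if_pos h, if_pos (by omega)]
        · rw [if_neg h, if_neg (by omega)]
      · rw [if_neg hii]

lemma finite_ch (k n : ℕ) (M : ℤ) : {s : Fin (n+1) → Vt k | IsCh M s}.Finite := by
  have h : (Set.univ.pi fun _ : Fin (n+1) => Set.univ.pi fun _ : Ix k => Set.Icc (-M) M).Finite :=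
    Set.Finite.pi fun _ => Set.Finite.pi fun _ => Set.finite_Icc _ _
  refine h.subset fun s hs => ?_
  intro t _ a _
  exact abs_le.1 ((hs.valid t).1 a)

/-- the combinatorial Borsuk–Ulam theorem -/
theorem comb {k n : ℕ} {M : ℤ} (hM : 0 < M) (hMe : Even M) (hn : n + 1 = 2^k) (hn0 : 0 < n)
    (σ : Fin n → Vt k → ZMod 2)
    (hσ : ∀ (j : Fin n) (g : Fin k → ℤˣ) (v : Vt k), Valid M v → σ j (g • v) = chi j g + σ j v) :
    ∃ s : Fin (n+1) → Vt k, IsCh M s ∧ ∀ j : Fin n, σ j (s j.castSucc) ≠ σ j (s j.succ) := by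
  classical
  by_contra hcon
  push Not at hcon
  have hfin := finite_ch k n M
  have hc : Fintype.card (Ix k) = n + k := by rw [card_Ix]; omega
  have key := sum_invariant (V := Vt k) (G := Fin k → ℤˣ) hfin.toFinset sg
    (by intro g s hs; simp only [Set.Finite.mem_toFinset, Set.mem_ofPred_eq] at hs ⊢; exact hs.smul g)
    (by intro g s hs l; simp only [Set.Finite.mem_toFinset, Set.mem_ofPred_eq] at hs
        exact sg_smul hM (hs.valid l) g)
    (by intro l
        obtain ⟨φ, hφ⟩ := hasInv_all hMe hc hn0 l
        refine ⟨φ, fun s hs => ?_⟩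
        simp only [Set.Finite.mem_toFinset, Set.mem_ofPred_eq] at hs ⊢
        exact hφ s hs)
    (fun j => chi j) σ (fun j v => chi j (sg v))
    (by intro j g s hs l; simp only [Set.Finite.mem_toFinset, Set.mem_ofPred_eq] at hs
        exact hσ j g _ (hs.valid l))
    (by intro j g s hs l; simp only [Set.Finite.mem_toFinset, Set.mem_ofPred_eq] at hs
        show chi j (sg (g • s l)) = _
        rw [sg_smul hM (hs.valid l) g, chi_mul])
  rw [sum_eq_zero] at key
  · have hst := star_isCh k n hM hMe hn
    rw [sum_eq_single_of_mem (fun t : Fin (n+1) => star k M t)] at key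
    · revert key
      refine (Finset.prod_ne_zero_iff.2 fun j _ => ?_).symm
      have := star_prod k n hM hn j
      simpa using this
    · simp only [mem_filter, Set.Finite.mem_toFinset, Set.mem_ofPred_eq]
      refine ⟨hst, ?_⟩
      funext i
      rw [sg_star k hM]
      have : ft 0 i = 0 := by
        unfold ft; have : 0 < 2^(i:ℕ) := by positivity
        omega
      simp [this]
    · intro s hs hne
      simp only [mem_filter, Set.Finite.mem_toFinset, Set.mem_ofPred_eq] at hs
      by_contra h
      rw [← ne_eq, Finset.prod_ne_zero_iff] at h
      exact hne (star_unique k n hM hn hs.1 hs.2 fun j => h j (mem_univ j))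
  · intro s hs
    simp only [mem_filter, Set.Finite.mem_toFinset, Set.mem_ofPred_eq] at hs
    obtain ⟨j, hj⟩ := hcon s hs.1
    refine prod_eq_zero (mem_univ j) ?_
    rw [hj]; exact CharTwo.add_self_eq_zero _

end IdemEx

namespace IdemEx
open Finset

/-- the product of cube boundaries -/
def ZZ (k : ℕ) : Set (Ix k → ℝ) := {z | (∀ a, |z a| ≤ 1) ∧ ∀ i, ∃ p, |z ⟨i, p⟩| = 1}

/-- real sign action -/
def rsm {k : ℕ} (g : Fin k → ℤˣ) (z : Ix k → ℝ) : Ix k → ℝ := fun a => ((g a.1 : ℤ) : ℝ) * z a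

lemma abs_unit (x : ℤˣ) : |((x : ℤ) : ℝ)| = 1 := by
  rcases Int.units_eq_one_or x with h | h <;> simp [h]

lemma rsm_mem {k : ℕ} (g : Fin k → ℤˣ) {z : Ix k → ℝ} (hz : z ∈ ZZ k) : rsm g z ∈ ZZ k := by
  have h : ∀ a, |rsm g z a| = |z a| := fun a => by
    unfold rsm; rw [abs_mul, abs_unit, one_mul]
  exact ⟨fun a => by rw [h]; exact hz.1 a, fun i => by
    obtain ⟨p, hp⟩ := hz.2 i; exact ⟨p, by rw [h]; exact hp⟩⟩

lemma rsm_mul {k : ℕ} (g h : Fin k → ℤˣ) (z : Ix k → ℝ) : rsm g (rsm h z) = rsm (g * h) z := by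
  funext a; simp [rsm, mul_assoc]

lemma rsm_one {k : ℕ} (z : Ix k → ℝ) : rsm 1 z = z := by
  funext a; simp [rsm]

lemma rsm_cont {k : ℕ} (g : Fin k → ℤˣ) : Continuous (rsm g) := by
  unfold rsm; fun_prop

lemma ZZ_compact (k : ℕ) : IsCompact (ZZ k) := by
  have h1 : IsCompact (Set.univ.pi fun _ : Ix k => Set.Icc (-1:ℝ) 1) :=
    isCompact_univ_pi fun _ => isCompact_Icc
  refine h1.of_isClosed_subset ?_ ?_
  · have : ZZ k = (⋂ a, {z : Ix k → ℝ | |z a| ≤ 1}) ∩ ⋂ i, ⋃ p, {z : Ix k → ℝ | |z ⟨i, p⟩| = 1} := by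
      ext z; simp [ZZ]
    rw [this]
    refine IsClosed.inter (isClosed_iInter fun a => isClosed_le (by fun_prop) (by fun_prop))
      (isClosed_iInter fun i => isClosed_iUnion_of_finite fun p => isClosed_eq (by fun_prop) (by fun_prop))
  · intro z hz a _
    exact abs_le.1 (hz.1 a)

/-- characters -/
def cA {k : ℕ} (A : Finset (Fin k)) (g : Fin k → ℤˣ) : ℝ := ∏ i ∈ A, ((g i : ℤ) : ℝ)

lemma cA_mul {k : ℕ} (A : Finset (Fin k)) (g h : Fin k → ℤˣ) : cA A (g * h) = cA A g * cA A h := by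
  simp [cA, prod_mul_distrib]

lemma cA_chi {k : ℕ} (j : ℕ) (g : Fin k → ℤˣ) :
    (cA (AA k j) g = 1 ∧ chi j g = 0) ∨ (cA (AA k j) g = -1 ∧ chi j g = 1) := by
  unfold cA chi
  generalize AA k j = A
  induction A using Finset.induction_on with
  | empty => simp
  | insert a A ha ih =>
    rw [prod_insert ha, sum_insert ha]
    rcases ih with ⟨h1, h2⟩ | ⟨h1, h2⟩ <;> rw [h1, h2] <;>
    rcases Int.units_eq_one_or (g a) with h | h <;> rw [h]
    · left; simp; decide
    · right; simp; decide
    · right; simp; decide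
    · left; simp; decide

/-- Fourier coefficient along the orbit -/
def oA {k : ℕ} (F : (Ix k → ℝ) → ℝ) (A : Finset (Fin k)) (z : Ix k → ℝ) : ℝ :=
  ∑ g : Fin k → ℤˣ, cA A g * F (rsm g z)

lemma oA_smul {k : ℕ} (F : (Ix k → ℝ) → ℝ) (A : Finset (Fin k)) (z : Ix k → ℝ) (h : Fin k → ℤˣ) :
    oA F A (rsm h z) = cA A h * oA F A z := by
  unfold oA
  rw [mul_sum, ← Equiv.sum_comp (Equiv.mulRight h) (fun g => cA A h * (cA A g * F (rsm g z)))]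
  refine sum_congr rfl fun g _ => ?_
  have h1 : cA A h * cA A h = 1 := by
    rw [cA, ← prod_mul_distrib]
    refine prod_eq_one fun i _ => ?_
    rcases Int.units_eq_one_or (h i) with h | h <;> simp [h]
  simp only [Equiv.coe_mulRight, cA_mul, rsm_mul]
  linear_combination -(cA A g * F (rsm (g * h) z)) * h1

lemma oA_cont {k : ℕ} (F : (Ix k → ℝ) → ℝ) (hF : ContinuousOn F (ZZ k)) (A : Finset (Fin k)) :
    ContinuousOn (oA F A) (ZZ k) := by
  unfold oA
  refine continuousOn_finsetSum _ fun g _ => continuousOn_const.mul ?_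
  exact hF.comp (rsm_cont g).continuousOn fun z hz => rsm_mem g hz

lemma exists_AA {k n : ℕ} (hn : n + 1 = 2^k) (A : Finset (Fin k)) (hA : A.Nonempty) :
    ∃ j : Fin n, AA k j = A := by
  classical
  set m := Nat.ofBits (fun i : Fin k => decide (i ∈ A)) with hm
  have hlt : m < 2^k := Nat.ofBits_lt_two_pow _
  have htb : ∀ i : Fin k, m.testBit i = decide (i ∈ A) := by
    intro i
    rw [hm, Nat.testBit_ofBits_lt _ _ i.2]
  have hpos : 0 < m := by
    by_contra h
    obtain ⟨i, hi⟩ := hA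
    have := htb i
    rw [show m = 0 by omega] at this
    simp [hi] at this
  refine ⟨⟨m - 1, by omega⟩, ?_⟩
  ext i
  simp only [AA, mem_filter, mem_univ, true_and]
  rw [show m - 1 + 1 = m by omega, htb]
  simp

lemma fourier {k : ℕ} (F : (Ix k → ℝ) → ℝ) (z : Ix k → ℝ)
    (h : ∀ A : Finset (Fin k), A.Nonempty → oA F A z = 0) (g : Fin k → ℤˣ) :
    (2:ℝ)^k * F (rsm g z) = oA F ∅ z := by
  have h1 : ∑ A : Finset (Fin k), cA A g * oA F A z = oA F ∅ z := by
    rw [sum_eq_single_of_mem ∅ (mem_univ _)]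
    · simp [cA]
    · intro A _ hA
      rw [h A (nonempty_iff_ne_empty.2 hA), mul_zero]
  rw [← h1]
  unfold oA
  simp_rw [mul_sum]
  rw [sum_comm]
  have h2 : ∀ e : Fin k → ℤˣ, ∑ A : Finset (Fin k), cA A g * (cA A e * F (rsm e z)) =
      if e = g then (2:ℝ)^k * F (rsm g z) else 0 := by
    intro e
    have : ∑ A : Finset (Fin k), cA A g * (cA A e * F (rsm e z)) =
        (∏ i : Fin k, (1 + ((g i : ℤ) : ℝ) * ((e i : ℤ) : ℝ))) * F (rsm e z) := by
      rw [Finset.prod_one_add, powerset_univ, sum_mul]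
      refine sum_congr rfl fun A _ => ?_
      simp only [cA, prod_mul_distrib]; ring
    rw [this]
    split_ifs with heg
    · subst heg
      congr 1
      rw [prod_congr rfl (g := fun _ => (2:ℝ))]
      · simp
      · intro i _
        rcases Int.units_eq_one_or (e i) with h | h <;> simp [h] <;> norm_num
    · obtain ⟨i, hi⟩ : ∃ i, e i ≠ g i := by
        by_contra hc; push Not at hc; exact heg (funext hc)
      rw [prod_eq_zero (mem_univ i), zero_mul]
      rcases Int.units_eq_one_or (e i) with h | h <;> rcases Int.units_eq_one_or (g i) with h' | h' <;>
        rw [h, h'] at hi ⊢ <;> simp at hi ⊢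
  rw [sum_congr rfl fun e _ => h2 e]
  simp

/-- scaling -/
noncomputable def scl {k : ℕ} (M : ℤ) (v : Vt k) : Ix k → ℝ := fun a => (v a : ℝ) / M

lemma scl_mem {k : ℕ} {M : ℤ} (hM : 0 < M) {v : Vt k} (hv : Valid M v) : scl M v ∈ ZZ k := by
  have hM' : (0:ℝ) < M := by exact_mod_cast hM
  have h : ∀ a, |scl M v a| = ((|v a| : ℤ) : ℝ) / M := fun a => by
    unfold scl; rw [abs_div, abs_of_pos hM']; simp
  refine ⟨fun a => ?_, fun i => ?_⟩
  · rw [h, div_le_one hM']; exact_mod_cast hv.1 a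
  · obtain ⟨p, hp⟩ := hv.2 i
    exact ⟨p, by rw [h, hp, div_self hM'.ne']⟩

lemma scl_smul {k : ℕ} (M : ℤ) (v : Vt k) (g : Fin k → ℤˣ) : scl M (g • v) = rsm g (scl M v) := by
  funext a
  simp only [scl, rsm, vt_smul_apply]
  push_cast; ring

lemma IsCh.close {k n : ℕ} {M : ℤ} {s : Fin (n+1) → Vt k} (hs : IsCh M s) (t : Fin (n+1)) (a : Ix k) :
    |s t a - s 0 a| ≤ t := by
  induction t using Fin.induction with
  | zero => simp
  | succ j ih =>
    obtain ⟨b, -, h2, h3⟩ := hs.step j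
    have : s j.succ a = s j.castSucc a ∨ s j.succ a = s j.castSucc a + 1 ∨
        s j.succ a = s j.castSucc a - 1 := by
      by_cases h : a = b
      · subst h; right; exact h2
      · left; exact h3 a h
    simp only [Fin.val_castSucc, Fin.val_succ] at ih ⊢
    rw [abs_le] at ih ⊢
    push_cast
    omega

/-- Every continuous function on the finite product is constant on some orbit -/
theorem finite_orbit {k : ℕ} (hk : 0 < k) (F : (Ix k → ℝ) → ℝ) (hF : ContinuousOn F (ZZ k)) :
    ∃ z ∈ ZZ k, ∀ g, F (rsm g z) = F z := by
  obtain ⟨n, hn⟩ : ∃ n, n + 1 = 2^k := ⟨2^k - 1, Nat.sub_add_cancel Nat.one_le_two_pow⟩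
  have hn0 : 0 < n := by
    have : 2^1 ≤ 2^k := Nat.pow_le_pow_right (by norm_num) hk
    omega
  haveI : Nonempty (Fin n) := ⟨⟨0, hn0⟩⟩
  set o : (Ix k → ℝ) → (Fin n → ℝ) := fun z j => oA F (AA k j) z with ho
  suffices h : ∃ z ∈ ZZ k, o z = 0 by
    obtain ⟨z, hz, h0⟩ := h
    refine ⟨z, hz, fun g => ?_⟩
    have hA : ∀ A : Finset (Fin k), A.Nonempty → oA F A z = 0 := by
      intro A hA
      obtain ⟨j, rfl⟩ := exists_AA hn A hA
      exact congrFun h0 j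
    have h1 := fourier F z hA g
    have h2 := fourier F z hA 1
    rw [rsm_one] at h2
    have : (2:ℝ)^k ≠ 0 := by positivity
    exact mul_left_cancel₀ this (h1.trans h2.symm)
  by_contra hcon
  push Not at hcon
  have hoc : ContinuousOn o (ZZ k) := continuousOn_pi.2 fun j => oA_cont F hF _
  have hne : (ZZ k).Nonempty := ⟨fun _ => 1, by simp [ZZ]⟩
  obtain ⟨z0, hz0, hmin⟩ := (ZZ_compact k).exists_isMinOn hne hoc.norm
  have hδ : 0 < ‖o z0‖ := norm_pos_iff.2 (hcon z0 hz0)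
  have huc := (ZZ_compact k).uniformContinuousOn_of_continuous hoc
  rw [Metric.uniformContinuousOn_iff] at huc
  obtain ⟨r, hr, hur⟩ := huc _ hδ
  obtain ⟨N, hN⟩ := exists_nat_gt ((n:ℝ) / r)
  set M : ℤ := 2 * (N + 1) with hM
  have hM0 : 0 < M := by omega
  have hMr : (n:ℝ) / M < r := by
    have h1 : (0:ℝ) < M := by exact_mod_cast hM0
    rw [div_lt_iff₀ hr] at hN
    rw [div_lt_iff₀ h1, hM]
    push_cast
    nlinarith
  classical
  obtain ⟨s, hs, hsj⟩ := comb hM0 (by rw [hM]; simp) hn hn0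
    (fun j v => if o (scl M v) j < 0 then 1 else if 0 < o (scl M v) j then 0 else chi j (sg v)) (by
      intro j g v hv
      have h1 : o (scl M (g • v)) j = cA (AA k j) g * o (scl M v) j := by
        simp only [ho]; rw [scl_smul, oA_smul]
      have h2 : chi j (sg (g • v)) = chi j g + chi j (sg v) := by
        rw [sg_smul hM0 hv, chi_mul]
      simp only [h1, h2]
      rcases cA_chi j g with ⟨c1, c2⟩ | ⟨c1, c2⟩
      · rw [c1, c2]; simp
      · rw [c1, c2]
        rcases lt_trichotomy (o (scl M v) j) 0 with h | h | h
        · simp [h, h.le, h.not_gt]; decide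
        · simp [h]
        · simp [h, h.le, h.not_gt])
  have hmem : ∀ t, scl M (s t) ∈ ZZ k := fun t => scl_mem hM0 (hs.valid t)
  have hbig := hmin (hmem 0)
  simp only [Set.mem_ofPred_eq] at hbig
  obtain ⟨j, hj⟩ : ∃ j, ‖o z0‖ ≤ |o (scl M (s 0)) j| := by
    by_contra hc
    push Not at hc
    have : ‖o (scl M (s 0))‖ < ‖o z0‖ := (pi_norm_lt_iff hδ).2 fun j => hc j
    exact absurd hbig (not_le.2 this)
  have hclose : ∀ t, |o (scl M (s t)) j - o (scl M (s 0)) j| < ‖o z0‖ := by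
    intro t
    have hd : dist (scl M (s t)) (scl M (s 0)) < r := by
      refine lt_of_le_of_lt ?_ hMr
      have h1 : (0:ℝ) < M := by exact_mod_cast hM0
      refine (dist_pi_le_iff (by positivity)).2 fun a => ?_
      rw [Real.dist_eq]
      have h2 : scl M (s t) a - scl M (s 0) a = ((s t a - s 0 a : ℤ) : ℝ) / M := by
        unfold scl; push_cast; ring
      rw [h2, abs_div, abs_of_pos h1]
      gcongr
      have h3 := hs.close t a
      have h4 : ((t : ℕ) : ℤ) ≤ n := by have := t.2; omega
      exact_mod_cast h3.trans h4
    have := hur _ (hmem t) _ (hmem 0) hd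
    exact lt_of_le_of_lt (dist_le_pi_dist (o (scl M (s t))) (o (scl M (s 0))) j) this
  apply hsj j
  have h1 := hclose j.castSucc
  have h2 := hclose j.succ
  rw [abs_lt] at h1 h2
  rcases le_total 0 (o (scl M (s 0)) j) with h | h
  · rw [abs_of_nonneg h] at hj
    have a1 : 0 < o (scl M (s j.castSucc)) j := by linarith
    have a2 : 0 < o (scl M (s j.succ)) j := by linarith
    simp [a1, a2, a1.not_gt, a2.not_gt]
  · rw [abs_of_nonpos h] at hj
    have a1 : o (scl M (s j.castSucc)) j < 0 := by linarith
    have a2 : o (scl M (s j.succ)) j < 0 := by linarith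
    simp [a1, a2]

end IdemEx

namespace IdemEx
open Filter Topology

section
variable {X : Type*} [TopologicalSpace X] {μ : C(X, ℝ) → ℝ}

lemma idem_mono (h : IsIdemMeasure μ) {φ ψ : C(X, ℝ)} (hle : ∀ x, φ x ≤ ψ x) : μ φ ≤ μ ψ := by
  have : φ ⊔ ψ = ψ := sup_eq_right.2 hle
  have h2 := h.2.2 φ ψ
  rw [this] at h2
  rw [h2]; exact le_max_left _ _

lemma idem_le_add (h : IsIdemMeasure μ) {φ ψ : C(X, ℝ)} (c : ℝ) (hle : ∀ x, φ x ≤ c + ψ x) :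
    μ φ ≤ c + μ ψ := by
  rw [← h.2.1]; exact idem_mono h hle

lemma idem_sup (h : IsIdemMeasure μ) {ι : Type*} (S : Finset ι) (hS : S.Nonempty) (ψ : ι → C(X, ℝ)) :
    ∃ s ∈ S, μ (S.sup' hS ψ) ≤ μ (ψ s) := by
  have : μ (S.sup' hS ψ) = S.sup' hS (fun s => μ (ψ s)) :=
    Finset.apply_sup'_eq_sup'_comp hS μ h.2.2
  obtain ⟨s, hs, he⟩ := Finset.exists_mem_eq_sup' hS (fun s => μ (ψ s))
  exact ⟨s, hs, by rw [this, he]⟩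

end

section
variable {X Y : Type*} [MetricSpace X] [CompactSpace X] [MetricSpace Y]

lemma idem_supp (f : C(X, Y)) {μ : C(X, ℝ) → ℝ} (h : IsIdemMeasure μ) (y : Y)
    (hy : ∀ κ : C(Y, ℝ), μ (κ.comp f) = κ y) {φ ψ : C(X, ℝ)} (hle : ∀ x, f x = y → φ x ≤ ψ x) :
    μ φ ≤ μ ψ := by
  refine le_of_forall_pos_le_add fun ε hε => ?_
  have hK : IsCompact {x | ψ x + ε ≤ φ x} :=
    (isClosed_le (by fun_prop) (by fun_prop)).isCompact
  obtain ⟨r, hr, hrK⟩ : ∃ r > 0, ∀ x, ψ x + ε ≤ φ x → r ≤ dist y (f x) := by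
    rcases Set.eq_empty_or_nonempty {x | ψ x + ε ≤ φ x} with he | hne
    · refine ⟨1, one_pos, fun x hx => ?_⟩
      have : x ∈ {x | ψ x + ε ≤ φ x} := hx
      rw [he] at this; exact absurd this (Set.notMem_empty x)
    · obtain ⟨x0, hx0, hmin⟩ := hK.exists_isMinOn hne
        (f := fun x => dist y (f x)) (by fun_prop)
      refine ⟨dist y (f x0), ?_, fun x hx => hmin hx⟩
      rw [gt_iff_lt, dist_pos]
      rintro rfl
      have h1 := hle x0 rfl
      have h2 : ψ x0 + ε ≤ φ x0 := hx0
      linarith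
  set C := (‖φ‖ + |μ ψ|) / r with hC
  have hC0 : 0 ≤ C := by positivity
  have hCr : C * r = ‖φ‖ + |μ ψ| := div_mul_cancel₀ _ hr.ne'
  let κ : C(Y, ℝ) := ⟨fun y' => μ ψ + C * dist y y', by fun_prop⟩
  have hκ : κ y = μ ψ := by simp [κ]
  have hb : μ φ ≤ μ ((ContinuousMap.const X ε + ψ) ⊔ κ.comp f) := by
    refine idem_mono h fun x => ?_
    rw [ContinuousMap.sup_apply]
    by_cases hx : ψ x + ε ≤ φ x
    · refine le_max_of_le_right ?_
      show φ x ≤ μ ψ + C * dist y (f x)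
      have h1 : φ x ≤ ‖φ‖ := (le_abs_self _).trans (φ.norm_coe_le_norm x)
      have h2 := mul_le_mul_of_nonneg_left (hrK x hx) hC0
      have h3 := neg_abs_le (μ ψ)
      linarith
    · refine le_max_of_le_left ?_
      show φ x ≤ ε + ψ x
      linarith [not_le.1 hx]
  rw [h.2.2, h.2.1, hy, hκ] at hb
  refine hb.trans (max_le (by linarith) (by linarith))

/-- the function `-n d(x, ·)` -/
def Dn (n : ℕ) (x : X) : C(X, ℝ) := ⟨fun z => -(n * dist x z), by fun_prop⟩

lemma Dn_apply (n : ℕ) (x z : X) : Dn n x z = -(n * dist x z) := rfl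

lemma lemA (f : C(X, Y)) {μ0 μ1 : C(X, ℝ) → ℝ} (h0 : IsIdemMeasure μ0) (h1 : IsIdemMeasure μ1)
    (y : Y) (hne : ∃ x, f x = y) (hy0 : ∀ κ : C(Y, ℝ), μ0 (κ.comp f) = κ y)
    (φ : C(X, ℝ)) (ε c : ℝ) (hε : 0 < ε) (n : ℕ)
    (hn : ∀ x z, φ x - n * dist x z ≤ φ z + ε)
    (hc : ∀ x, f x = y → μ0 (Dn n x) ≤ μ1 (Dn n x) + c) : μ0 φ ≤ μ1 φ + c + 2 * ε := by
  have hF : IsCompact (f ⁻¹' {y}) := (isClosed_singleton.preimage f.continuous).isCompact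
  obtain ⟨t, ht, hcov⟩ := hF.elim_nhds_subcover
    (fun x => {z | φ z < φ x - n * dist x z + ε}) (by
      intro x _
      refine (isOpen_lt (by fun_prop) (by fun_prop)).mem_nhds ?_
      simp [hε])
  have htne : t.Nonempty := by
    obtain ⟨x, hx⟩ := hne
    have := hcov (show x ∈ f ⁻¹' {y} from hx)
    simp only [Set.mem_iUnion] at this
    obtain ⟨s, hs, -⟩ := this
    exact ⟨s, hs⟩
  set ψ : X → C(X, ℝ) := fun x => ContinuousMap.const X (φ x + ε) + Dn n x with hψ
  obtain ⟨s, hs, hle⟩ := idem_sup h0 t htne ψ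
  have h2 : μ0 φ ≤ μ0 (t.sup' htne ψ) := by
    refine idem_supp f h0 y hy0 fun z hz => ?_
    have := hcov (show z ∈ f ⁻¹' {y} from hz)
    simp only [Set.mem_iUnion] at this
    obtain ⟨x, hx, hlt⟩ := this
    have hlt : φ z < φ x - n * dist x z + ε := hlt
    have h3 : ψ x ≤ t.sup' htne ψ := Finset.le_sup' ψ hx
    have h4 : ψ x z ≤ (t.sup' htne ψ) z := h3 z
    have h5 : ψ x z = φ x + ε + -(n * dist x z) := rfl
    linarith
  have h3 := hc s (ht s hs)
  have h4 : μ1 (Dn n s) ≤ (ε - φ s) + μ1 φ := by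
    refine idem_le_add h1 _ fun z => ?_
    have := hn s z
    rw [Dn_apply]; linarith
  have h5 : μ0 (ψ s) = φ s + ε + μ0 (Dn n s) := h0.2.1 _ _
  linarith

lemma exists_n0 (φ : C(X, ℝ)) (ε : ℝ) (hε : 0 < ε) : ∃ n0 : ℕ, ∀ n ≥ n0, ∀ x z,
    φ x - n * dist x z ≤ φ z + ε := by
  have huc := CompactSpace.uniformContinuous_of_continuous φ.continuous
  obtain ⟨δ, hδ, h⟩ := Metric.uniformContinuous_iff.1 huc ε hε
  obtain ⟨n0, hn0⟩ := exists_nat_gt (2 * ‖φ‖ / δ)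
  refine ⟨n0, fun n hn x z => ?_⟩
  have hnn : (n0 : ℝ) ≤ n := by exact_mod_cast hn
  rcases lt_or_ge (dist x z) δ with hd | hd
  · have := h hd
    rw [Real.dist_eq, abs_lt] at this
    have : 0 ≤ n * dist x z := by positivity
    linarith
  · rw [div_lt_iff₀ hδ] at hn0
    have h1 : φ x ≤ ‖φ‖ := (le_abs_self _).trans (φ.norm_coe_le_norm x)
    have h2 : -‖φ‖ ≤ φ z := (abs_le.1 (φ.norm_coe_le_norm z)).1
    have h3 : n0 * δ ≤ n * dist x z := by gcongr
    linarith

lemma h_cont (f : C(X, Y)) (s : Y → C(X, ℝ) → ℝ) (hs : ∀ y, IsIdemMeasure (s y))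
    (hc : ∀ φ, Continuous fun y => s y φ) (n : ℕ) : Continuous fun x => s (f x) (Dn n x) := by
  have hD : ∀ x x' z : X, Dn n x z ≤ n * dist x x' + Dn n x' z := by
    intro x x' z
    rw [Dn_apply, Dn_apply]
    have h1 : dist x' z ≤ dist x' x + dist x z := dist_triangle _ _ _
    rw [dist_comm x' x] at h1
    have h2 : (0:ℝ) ≤ n := by positivity
    nlinarith
  rw [continuous_iff_continuousAt]
  intro x0
  have c1 : Continuous fun x => -(n * dist x x0) + s (f x) (Dn n x0) :=
    Continuous.add (by fun_prop) ((hc _).comp f.continuous)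
  have c2 : Continuous fun x => (n * dist x x0) + s (f x) (Dn n x0) :=
    Continuous.add (by fun_prop) ((hc _).comp f.continuous)
  have t1 := c1.tendsto x0
  have t2 := c2.tendsto x0
  simp only [dist_self, mul_zero, neg_zero, zero_add] at t1 t2
  refine tendsto_of_tendsto_of_tendsto_of_le_of_le t1 t2 (fun x => ?_) (fun x => ?_)
  · have := idem_le_add (hs (f x)) _ (hD x0 x)
    rw [dist_comm x0 x] at this
    dsimp only; linarith
  · exact idem_le_add (hs (f x)) _ (hD x x0)

end

theorem no_bundle {X Y : Type*} [MetricSpace X] [CompactSpace X] [MetricSpace Y] [CompactSpace Y]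
    (f : C(X, Y)) (hsurj : Function.Surjective f)
    (hconst : ∀ g : X → ℝ, Continuous g → ∃ y, ∀ x x', f x = y → f x' = y → g x = g x')
    (H : IdemMeasure X ≃ₜ (IdemMeasure Y × (ℕ → Set.Icc (0 : ℝ) 1)))
    (hH : ∀ μ, ((H μ).1).val = pushF f μ.val) : False := by
  let δ : Y → IdemMeasure Y := fun y => ⟨fun φ => φ y, fun c => rfl, fun c φ => rfl, fun φ ψ => rfl⟩
  have hδ : Continuous δ := by
    refine Continuous.subtype_mk (continuous_pi fun φ => φ.continuous) _
  let S : (ℕ → Set.Icc (0 : ℝ) 1) → Y → C(X, ℝ) → ℝ := fun q y => (H.symm (δ y, q)).val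
  have hSi : ∀ q y, IsIdemMeasure (S q y) := fun q y => (H.symm (δ y, q)).2
  have hSc : ∀ q φ, Continuous fun y => S q y φ := by
    intro q φ
    have h1 : Continuous fun y => H.symm (δ y, q) :=
      H.symm.continuous.comp (hδ.prodMk continuous_const)
    exact (continuous_apply φ).comp (continuous_subtype_val.comp h1)
  have hSf : ∀ q y (κ : C(Y, ℝ)), S q y (κ.comp f) = κ y := by
    intro q y κ
    have h1 := hH (H.symm (δ y, q))
    rw [H.apply_symm_apply] at h1
    exact (congrFun h1 κ).symm
  let q0 : ℕ → Set.Icc (0 : ℝ) 1 := fun _ => 0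
  let q1 : ℕ → Set.Icc (0 : ℝ) 1 := fun _ => 1
  have hg : ∀ n : ℕ, ∃ y, ∀ x x', f x = y → f x' = y →
      S q0 (f x) (Dn n x) - S q1 (f x) (Dn n x) = S q0 (f x') (Dn n x') - S q1 (f x') (Dn n x') :=
    fun n => hconst _ ((h_cont f (S q0) (hSi q0) (hSc q0) n).sub
      (h_cont f (S q1) (hSi q1) (hSc q1) n))
  choose y hy using hg
  have key : ∀ φ : C(X, ℝ), ∀ ε > 0, ∃ n0 : ℕ, ∀ n ≥ n0,
      |S q0 (y n) φ - S q1 (y n) φ| ≤ 2 * ε := by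
    intro φ ε hε
    obtain ⟨n0, hn0⟩ := exists_n0 φ ε hε
    refine ⟨n0, fun n hn => ?_⟩
    obtain ⟨x1, hx1⟩ := hsurj (y n)
    set c := S q0 (y n) (Dn n x1) - S q1 (y n) (Dn n x1) with hc
    have hcc : ∀ x, f x = y n → S q0 (y n) (Dn n x) = S q1 (y n) (Dn n x) + c := by
      intro x hx
      have := hy n x x1 hx hx1
      rw [hx, hx1] at this
      rw [hc, ← this]; ring
    have a1 : ∀ ψ : C(X, ℝ), ∀ ε' > 0, (∀ x z, ψ x - n * dist x z ≤ ψ z + ε') →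
        S q0 (y n) ψ ≤ S q1 (y n) ψ + c + 2 * ε' := fun ψ ε' hε' h' =>
      lemA f (hSi q0 _) (hSi q1 _) (y n) ⟨x1, hx1⟩ (hSf q0 _) ψ ε' c hε' n h'
        (fun x hx => (hcc x hx).le)
    have a2 : ∀ ψ : C(X, ℝ), ∀ ε' > 0, (∀ x z, ψ x - n * dist x z ≤ ψ z + ε') →
        S q1 (y n) ψ ≤ S q0 (y n) ψ + (-c) + 2 * ε' := fun ψ ε' hε' h' =>
      lemA f (hSi q1 _) (hSi q0 _) (y n) ⟨x1, hx1⟩ (hSf q1 _) ψ ε' (-c) hε' n h'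
        (fun x hx => by rw [hcc x hx]; linarith)
    have z0 : ∀ q, S q (y n) (ContinuousMap.const X 0) = 0 := fun q => (hSi q _).1 0
    have hz : ∀ ε' > 0, ∀ x z : X, (ContinuousMap.const X (0:ℝ)) x - n * dist x z ≤
        (ContinuousMap.const X (0:ℝ)) z + ε' := by
      intro ε' hε' x z
      have : 0 ≤ n * dist x z := by positivity
      simp only [ContinuousMap.const_apply]; linarith
    have c1 : 0 ≤ c := by
      refine le_of_forall_pos_le_add fun e he => ?_
      have := a1 _ (e/2) (by linarith) (hz _ (by linarith))
      rw [z0, z0] at this; linarith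
    have c2 : c ≤ 0 := by
      refine le_of_forall_pos_le_add fun e he => ?_
      have := a2 _ (e/2) (by linarith) (hz _ (by linarith))
      rw [z0, z0] at this; linarith
    have b1 := a1 φ ε hε (hn0 n hn)
    have b2 := a2 φ ε hε (hn0 n hn)
    rw [abs_le]
    constructor <;> linarith
  obtain ⟨y', -, θ, hθ, hlim⟩ := isCompact_univ.tendsto_subseq (x := y) (fun n => Set.mem_univ _)
  have heq : S q0 y' = S q1 y' := by
    funext φ
    have h1 : ∀ ε > 0, |S q0 y' φ - S q1 y' φ| ≤ 0 + 2 * ε := by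
      intro ε hε
      obtain ⟨n0, hn0⟩ := key φ ε hε
      have t : Tendsto (fun m => |S q0 (y (θ m)) φ - S q1 (y (θ m)) φ|) atTop
          (𝓝 |S q0 y' φ - S q1 y' φ|) := by
        have hc : Continuous fun z => |S q0 z φ - S q1 z φ| := ((hSc q0 φ).sub (hSc q1 φ)).abs
        exact (hc.tendsto y').comp hlim
      rw [zero_add]
      refine le_of_tendsto t ?_
      filter_upwards [eventually_ge_atTop n0] with m hm
      exact hn0 _ (hm.trans hθ.le_apply)
    have h2 : |S q0 y' φ - S q1 y' φ| ≤ 0 := le_of_forall_pos_le_add fun e he => by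
      have := h1 (e/2) (by linarith)
      linarith
    exact sub_eq_zero.1 (abs_nonpos_iff.1 h2)
  have h3 : H.symm (δ y', q0) = H.symm (δ y', q1) := Subtype.ext heq
  have h4 := congrArg Prod.snd (H.symm.injective h3)
  have h5 := congrArg Subtype.val (congrFun h4 0)
  simp [q0, q1] at h5

end IdemEx

namespace IdemEx
open Filter Topology

/-- all coordinates -/
abbrev Jx := Σ i : ℕ, Fin (2^i+1)

/-- the space `X` -/
def XX : Set (Jx → ℝ) := {x | (∀ a, |x a| ≤ 1) ∧ ∀ i, ∃ p, |x ⟨i, p⟩| = 1}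

lemma XX_compact : IsCompact XX := by
  have h1 : IsCompact (Set.univ.pi fun _ : Jx => Set.Icc (-1:ℝ) 1) :=
    isCompact_univ_pi fun _ => isCompact_Icc
  refine h1.of_isClosed_subset ?_ ?_
  · have : XX = (⋂ a, {z : Jx → ℝ | |z a| ≤ 1}) ∩ ⋂ i, ⋃ p, {z : Jx → ℝ | |z ⟨i, p⟩| = 1} := by
      ext z; simp [XX]
    rw [this]
    refine IsClosed.inter (isClosed_iInter fun a => isClosed_le (by fun_prop) (by fun_prop))
      (isClosed_iInter fun i => isClosed_iUnion_of_finite fun p => isClosed_eq (by fun_prop) (by fun_prop))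
  · intro z hz a _
    exact abs_le.1 (hz.1 a)

/-- sign action -/
def xsm (g : ℕ → ℤˣ) (x : XX) : XX := ⟨fun a => ((g a.1 : ℤ) : ℝ) * x.1 a, by
  have h : ∀ a : Jx, |((g a.1 : ℤ) : ℝ) * x.1 a| = |x.1 a| := fun a => by
    rw [abs_mul, abs_unit, one_mul]
  exact ⟨fun a => by rw [h]; exact x.2.1 a, fun i => by
    obtain ⟨p, hp⟩ := x.2.2 i; exact ⟨p, by rw [h]; exact hp⟩⟩⟩

lemma xsm_val (g : ℕ → ℤˣ) (x : XX) (a : Jx) : (xsm g x).1 a = ((g a.1 : ℤ) : ℝ) * x.1 a := rfl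

lemma xsm_cont (g : ℕ → ℤˣ) : Continuous (xsm g) := by
  rw [continuous_induced_rng]
  refine continuous_pi fun a => ?_
  have h : Continuous fun x : XX => x.1 a := (continuous_apply a).comp continuous_subtype_val
  exact continuous_const.mul h

lemma xsm_mul (g h : ℕ → ℤˣ) (x : XX) : xsm g (xsm h x) = xsm (g * h) x := by
  apply Subtype.ext; funext a; simp [xsm_val, mul_assoc]

lemma xsm_one (x : XX) : xsm 1 x = x := by
  apply Subtype.ext; funext a; simp [xsm_val]

/-- invariants -/
def PP (x : XX) : (Σ i : ℕ, Fin (2^i+1) × Fin (2^i+1)) → ℝ := fun c =>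
  x.1 ⟨c.1, c.2.1⟩ * x.1 ⟨c.1, c.2.2⟩

lemma PP_cont : Continuous PP :=
  continuous_pi fun _ => ((continuous_apply _).comp continuous_subtype_val).mul
    ((continuous_apply _).comp continuous_subtype_val)

lemma PP_xsm (g : ℕ → ℤˣ) (x : XX) : PP (xsm g x) = PP x := by
  funext ⟨i, p, q⟩
  simp only [PP, xsm_val]
  rcases Int.units_eq_one_or (g i) with h | h <;> simp [h]

lemma PP_eq {x x' : XX} (h : PP x = PP x') : ∃ g, x' = xsm g x := by
  have : ∀ i : ℕ, ∃ e : ℤˣ, ∀ q, x'.1 ⟨i, q⟩ = ((e : ℤ) : ℝ) * x.1 ⟨i, q⟩ := by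
    intro i
    obtain ⟨p, hp⟩ := x.2.2 i
    have hh : ∀ q, x.1 ⟨i, p⟩ * x.1 ⟨i, q⟩ = x'.1 ⟨i, p⟩ * x'.1 ⟨i, q⟩ := fun q =>
      congrFun h ⟨i, p, q⟩
    have h1 : x.1 ⟨i, p⟩ * x.1 ⟨i, p⟩ = 1 := by
      rw [← abs_mul_abs_self, hp]; norm_num
    have h2 : x'.1 ⟨i, p⟩ * x'.1 ⟨i, p⟩ = 1 := by rw [← hh, h1]
    rcases mul_self_eq_one_iff.1 h1 with a | a <;> rcases mul_self_eq_one_iff.1 h2 with b | b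
    · exact ⟨1, fun q => by have := hh q; rw [a, b] at this; simp; linarith⟩
    · exact ⟨-1, fun q => by have := hh q; rw [a, b] at this; simp; linarith⟩
    · exact ⟨-1, fun q => by have := hh q; rw [a, b] at this; simp; linarith⟩
    · exact ⟨1, fun q => by have := hh q; rw [a, b] at this; simp; linarith⟩
  choose g hg using this
  exact ⟨g, Subtype.ext (funext fun ⟨i, q⟩ => hg i q)⟩

/-- extension of finitely many blocks -/
def ext (k : ℕ) (z : Ix k → ℝ) : Jx → ℝ := fun a =>
  if h : a.1 < k then z ⟨⟨a.1, h⟩, a.2⟩ else 1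

lemma ext_mem {k : ℕ} {z : Ix k → ℝ} (hz : z ∈ ZZ k) : ext k z ∈ XX := by
  refine ⟨fun a => ?_, fun i => ?_⟩
  · unfold ext
    split_ifs with h
    · exact hz.1 _
    · simp
  · by_cases h : i < k
    · obtain ⟨p, hp⟩ := hz.2 ⟨i, h⟩
      exact ⟨p, by simp only [ext, h, dif_pos]; exact hp⟩
    · exact ⟨0, by simp [ext, h]⟩

lemma ext_cont (k : ℕ) : Continuous (ext k) := by
  refine continuous_pi fun a => ?_
  unfold ext
  split_ifs with h
  · fun_prop
  · fun_prop

lemma finite_orbit' (g : XX → ℝ) (hg : Continuous g) (k : ℕ) :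
    ∃ x : XX, ∀ e : ℕ → ℤˣ, (∀ i, k < i → e i = 1) → g (xsm e x) = g x := by
  classical
  set F : (Ix (k+1) → ℝ) → ℝ := fun z => if h : z ∈ ZZ (k+1) then g ⟨ext (k+1) z, ext_mem h⟩ else 0
    with hF
  have hFc : ContinuousOn F (ZZ (k+1)) := by
    rw [continuousOn_iff_continuous_domRestrict]
    have : (ZZ (k+1)).domRestrict F = fun z : ZZ (k+1) => g ⟨ext (k+1) z.1, ext_mem z.2⟩ := by
      funext z; simp [hF, Set.domRestrict, z.2]
    rw [this]
    refine hg.comp (Continuous.subtype_mk ((ext_cont (k+1)).comp continuous_subtype_val) _)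
  obtain ⟨z, hz, h⟩ := finite_orbit (Nat.succ_pos k) F hFc
  refine ⟨⟨ext (k+1) z, ext_mem hz⟩, fun e he => ?_⟩
  have h1 := h (fun i => e i)
  have hz' := rsm_mem (fun i : Fin (k+1) => e i) hz
  simp only [hF, dif_pos hz, dif_pos hz'] at h1
  rw [← h1]
  congr 1
  apply Subtype.ext
  funext a
  rw [xsm_val]
  simp only [ext]
  split_ifs with h2
  · rfl
  · rw [he _ (by omega)]; simp

instance : CompactSpace XX := isCompact_iff_compactSpace.1 XX_compact

lemma orbit_const (g : XX → ℝ) (hg : Continuous g) : ∃ x : XX, ∀ e, g (xsm e x) = g x := by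
  choose x hx using finite_orbit' g hg
  obtain ⟨x', -, θ, hθ, hlim⟩ := isCompact_univ.tendsto_subseq (x := x) (fun n => Set.mem_univ _)
  refine ⟨x', fun e => ?_⟩
  have t1 : Tendsto (fun m => g (x (θ m))) atTop (𝓝 (g x')) := (hg.tendsto x').comp hlim
  have t2 : Tendsto (fun m => xsm (fun i => if i ≤ θ m then e i else 1) (x (θ m))) atTop
      (𝓝 (xsm e x')) := by
    rw [tendsto_subtype_rng, tendsto_pi_nhds]
    intro a
    have h1 : Tendsto (fun m => (xsm e (x (θ m))).1 a) atTop (𝓝 ((xsm e x').1 a)) := by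
      have hc : Continuous fun w => (xsm e w).1 a :=
        (continuous_apply a).comp (continuous_subtype_val.comp (xsm_cont e))
      exact (hc.tendsto x').comp hlim
    refine h1.congr' ?_
    filter_upwards [eventually_ge_atTop a.1] with m hm
    rw [xsm_val, xsm_val, if_pos (hm.trans hθ.le_apply)]
  have t3 := (hg.tendsto (xsm e x')).comp t2
  refine tendsto_nhds_unique t3 (t1.congr fun m => ?_)
  refine (hx (θ m) _ fun i hi => ?_).symm
  rw [if_neg (by omega)]

/-- the map -/
def ff : XX → Set.range PP := Set.rangeFactorization PP

lemma ff_cont : Continuous ff := PP_cont.subtype_mk _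

lemma ff_eq {x x' : XX} : ff x = ff x' ↔ ∃ g, x' = xsm g x := by
  constructor
  · intro h; exact PP_eq (congrArg Subtype.val h)
  · rintro ⟨g, rfl⟩; exact Subtype.ext (PP_xsm g x).symm

lemma ff_surj : Function.Surjective ff := Set.rangeFactorization_surjective

lemma ff_open : IsOpenMap ff := by
  intro U hU
  have hq : IsQuotientMap ff := (ff_cont.isClosedMap).isQuotientMap ff_cont ff_surj
  rw [← hq.isOpen_preimage]
  have : ff ⁻¹' (ff '' U) = ⋃ g, xsm g ⁻¹' U := by
    ext x
    simp only [Set.mem_preimage, Set.mem_image, Set.mem_iUnion]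
    constructor
    · rintro ⟨u, hu, h⟩
      obtain ⟨g, rfl⟩ := ff_eq.1 h.symm
      exact ⟨g, hu⟩
    · rintro ⟨g, hg⟩
      exact ⟨_, hg, (ff_eq.2 ⟨g, rfl⟩).symm⟩
  rw [this]
  exact isOpen_iUnion fun g => hU.preimage (xsm_cont g)

lemma fiber_inf (y : Set.range PP) : (ff ⁻¹' {y}).Infinite := by
  obtain ⟨x, rfl⟩ := ff_surj y
  refine Set.infinite_of_injective_forall_mem
    (f := fun m : ℕ => xsm (fun i => if i = m then -1 else 1) x) ?_ ?_
  · intro m m' h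
    by_contra hne
    obtain ⟨p, hp⟩ := x.2.2 m
    have h1 := congrFun (congrArg Subtype.val h) ⟨m, p⟩
    simp only [xsm_val, hne, if_true, if_false] at h1
    have h2 : x.1 ⟨m, p⟩ = 0 := by push_cast at h1; linarith
    rw [h2] at hp; simp at hp
  · intro m
    exact (ff_eq.2 ⟨_, rfl⟩).symm

lemma Y_inf : Infinite (Set.range PP) := by
  let w : Set.Icc (0:ℝ) 1 → XX := fun t => ⟨fun a => if a = ⟨0, 1⟩ then t else 1, by
    refine ⟨fun a => ?_, fun i => ⟨0, ?_⟩⟩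
    · dsimp only
      split_ifs
      · rw [abs_of_nonneg t.2.1]; exact t.2.2
      · simp
    · dsimp only
      rw [if_neg]
      · simp
      · rintro h
        obtain rfl : i = 0 := congrArg Sigma.fst h
        have : (0 : Fin (2^0+1)) = 1 := by simpa using h
        exact absurd this (by decide)⟩
  have hinj : Function.Injective (fun t => ff (w t)) := by
    intro t t' h
    have h1 := congrFun (congrArg Subtype.val h) ⟨0, 0, 1⟩
    change PP (w t) ⟨0, 0, 1⟩ = PP (w t') ⟨0, 0, 1⟩ at h1
    have h01 : (⟨0, 0⟩ : Jx) ≠ ⟨0, 1⟩ := by decide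
    simp only [PP, w, if_neg h01, if_true, one_mul] at h1
    exact Subtype.ext h1
  haveI : Infinite (Set.Icc (0:ℝ) 1) := Set.infinite_coe_iff.2 (Set.Icc_infinite (by norm_num))
  exact Infinite.of_injective _ hinj

end IdemEx

theorem statement14 :
    ∃ (X Y : Type) (tX : TopologicalSpace X) (tY : TopologicalSpace Y) (f : X → Y)
      (hf : @Continuous X Y tX tY f),
      @CompactSpace X tX ∧ @TopologicalSpace.MetrizableSpace X tX ∧ Infinite X ∧
      @CompactSpace Y tY ∧ @TopologicalSpace.MetrizableSpace Y tY ∧ Infinite Y ∧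
      @IsOpenMap X Y tX tY f ∧ Function.Surjective f ∧
      (∀ y : Y, (f ⁻¹' {y}).Infinite) ∧
      ¬ ∃ H : @IdemMeasure X tX ≃ₜ (@IdemMeasure Y tY × (ℕ → Set.Icc (0 : ℝ) 1)),
          ∀ μ : @IdemMeasure X tX,
            ((H μ).1).val = @pushF X Y tX tY ⟨f, hf⟩ μ.val := by
  have hY : CompactSpace (Set.range IdemEx.PP) :=
    isCompact_iff_compactSpace.1 (isCompact_range IdemEx.PP_cont)
  refine ⟨IdemEx.XX, Set.range IdemEx.PP, inferInstance, inferInstance, IdemEx.ff, IdemEx.ff_cont,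
    inferInstance, inferInstance, ?_, hY, inferInstance, IdemEx.Y_inf, IdemEx.ff_open,
    IdemEx.ff_surj, IdemEx.fiber_inf, ?_⟩
  · obtain ⟨y⟩ := IdemEx.Y_inf.nonempty
    exact Set.infinite_univ_iff.1 ((IdemEx.fiber_inf y).mono (Set.subset_univ _))
  · rintro ⟨H, hH⟩
    letI mX : MetricSpace IdemEx.XX := TopologicalSpace.metrizableSpaceMetric _
    letI mY : MetricSpace (Set.range IdemEx.PP) := TopologicalSpace.metrizableSpaceMetric _
    refine IdemEx.no_bundle (X := IdemEx.XX) (Y := Set.range IdemEx.PP)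
      ⟨IdemEx.ff, IdemEx.ff_cont⟩ IdemEx.ff_surj ?_ H hH
    intro g hg
    obtain ⟨x, hx⟩ := IdemEx.orbit_const g hg
    refine ⟨IdemEx.ff x, fun a b ha hb => ?_⟩
    obtain ⟨e, rfl⟩ := IdemEx.ff_eq.1 (Eq.symm ha)
    obtain ⟨e', rfl⟩ := IdemEx.ff_eq.1 (Eq.symm hb)
    rw [hx, hx]
end
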